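/- arXiv:2605.20895 — 7 statements merged into one kernel-verified Lean document; each statement's English description precedes it below -/
import Mathlib

section
/- Let N be a positive integer, h ∈ {1,…,N} with gcd(N,h)=1, and let c: ℝ → ℝ be a 1-periodic continuous function with c(t) = c(1−t) for all t. Suppose (ĉ_N(m))_{m=0}^{N−1} are complex numbers such that c(k/N) = Σ_{m=0}^{N−1} ĉ_N(m) exp(2πi m k/N) for all k = 0,1,…,N−1, and regard ĉ_N as an N-periodic function of its integer argument. Then the tensor product energy of the lattice Λ_{N,h} satisfies E_c(Λ_{N,h}) = N² Σ_{m=0}^{N−1} ĉ_N(m) ĉ_N(hm). -/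
open Real

lemma aux_geom (N : ℕ) (z : ℂ) (hz : IsPrimitiveRoot z N) (a : ℤ) :
    ∑ k ∈ Finset.range N, z ^ (a * (k : ℤ)) = if (N : ℤ) ∣ a then (N : ℂ) else 0 := by
  have h1 : ∀ k : ℕ, z ^ (a * (k : ℤ)) = (z ^ a) ^ k := by
    intro k
    rw [zpow_mul, zpow_natCast]
  simp only [h1]
  split_ifs with hd
  · rw [(hz.zpow_eq_one_iff_dvd a).2 hd]
    simp
  · have hne : z ^ a ≠ 1 := fun h => hd ((hz.zpow_eq_one_iff_dvd a).1 h)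
    have h2 : (z ^ a) ^ N = 1 := by
      rw [← zpow_natCast, ← zpow_mul]
      exact (hz.zpow_eq_one_iff_dvd _).2 (Dvd.intro_left a rfl)
    rw [geom_sum_eq hne, h2]
    simp

/-- Tensor product energy of the lattice `Λ_{N,h} = {(k/N, {hk/N}) : k = 0,…,N−1}`
expressed via the discrete Fourier coefficients of the potential `c`. -/
theorem tensor_product_energy_of_lattice
    (N : ℕ) (hN : 0 < N) (h : ℕ) (hh1 : 1 ≤ h) (hhN : h ≤ N)
    (hgcd : Nat.gcd N h = 1)
    (c : ℝ → ℝ) (hc : Continuous c)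
    (hper : ∀ t : ℝ, c (t + 1) = c t)
    (hsym : ∀ t : ℝ, c t = c (1 - t))
    (chat : ℤ → ℂ) (hchatper : ∀ m : ℤ, chat (m + N) = chat m)
    (hdft : ∀ k : ℕ, k < N →
      (c ((k : ℝ) / N) : ℂ) =
        ∑ m ∈ Finset.range N,
          chat m * Complex.exp (2 * (π : ℂ) * Complex.I * (m : ℂ) * (k : ℂ) / (N : ℂ))) :
    ((∑ k ∈ Finset.range N, ∑ l ∈ Finset.range N,
        c ((k : ℝ) / N - (l : ℝ) / N) *
          c (Int.fract ((h * k : ℝ) / N) - Int.fract ((h * l : ℝ) / N)) : ℝ) : ℂ) =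
      (N : ℂ) ^ 2 * ∑ m ∈ Finset.range N, chat m * chat (h * m) := by
  have hNC : (N : ℂ) ≠ 0 := by exact_mod_cast hN.ne'
  have hNR : (N : ℝ) ≠ 0 := by exact_mod_cast hN.ne'
  have hNZ : (N : ℤ) ≠ 0 := by exact_mod_cast hN.ne'
  obtain ⟨z, hzdef⟩ : ∃ z : ℂ, z = Complex.exp (2 * π * Complex.I / N) := ⟨_, rfl⟩
  have hz : IsPrimitiveRoot z N := by
    rw [hzdef]; exact Complex.isPrimitiveRoot_exp N hN.ne'
  have hz0 : z ≠ 0 := by rw [hzdef]; exact Complex.exp_ne_zero _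
  have hP : Function.Periodic c 1 := hper
  have hcP : Function.Periodic chat (N : ℤ) := hchatper
  have hPi : ∀ (t : ℝ) (n : ℤ), c (t + n) = c t := by
    intro t n
    simpa using hP.int_mul n t
  have hci : ∀ (t n : ℤ), chat (t + n * N) = chat t := by
    intro t n
    simpa using hcP.int_mul n t
  have hF : ∀ j : ℤ, (c ((j : ℝ) / N) : ℂ) =
      ∑ m ∈ Finset.range N, chat m * z ^ ((m : ℤ) * j) := by
    intro j
    obtain ⟨r, hr⟩ := Int.eq_ofNat_of_zero_le (Int.emod_nonneg j hNZ)
    have hrN : r < N := by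
      have := Int.emod_lt_of_pos j (by exact_mod_cast hN : (0 : ℤ) < N)
      omega
    have hj : j = r + N * (j / N) := by
      have := Int.emod_add_mul_ediv j N
      rw [hr] at this
      exact this.symm
    generalize j / (N : ℤ) = q at hj
    have e1 : (j : ℝ) / N = (r : ℝ) / N + (q : ℤ) := by
      rw [hj]; push_cast; field_simp
    rw [e1, hPi, hdft r hrN]
    refine Finset.sum_congr rfl fun m _ => ?_
    congr 1
    have e2 : z ^ ((m : ℤ) * j) = z ^ ((m * r : ℕ) : ℤ) := by
      have : (m : ℤ) * j = ((m * r : ℕ) : ℤ) + N * (m * q) := by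
        rw [hj]; push_cast; ring
      rw [this, zpow_add₀ hz0, (hz.zpow_eq_one_iff_dvd _).2 (Dvd.intro _ rfl), mul_one]
    rw [e2, zpow_natCast, hzdef, ← Complex.exp_nat_mul]
    congr 1
    push_cast
    ring
  have hF' : ∀ j : ℤ, (c ((j : ℝ) / N) : ℂ) =
      ∑ m ∈ Finset.range N, chat m * z ^ (-((m : ℤ) * j)) := by
    intro j
    have e : c ((j : ℝ) / N) = c (((-j : ℤ) : ℝ) / N) := by
      rw [hsym, ← hPi (((-j : ℤ) : ℝ) / N) 1]
      congr 1
      push_cast; ring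
    rw [e, hF]
    simp only [mul_neg]
  have hterm : ∀ k l : ℕ, ((c ((k : ℝ) / N - (l : ℝ) / N) *
          c (Int.fract ((h * k : ℝ) / N) - Int.fract ((h * l : ℝ) / N)) : ℝ) : ℂ) =
      ∑ n ∈ Finset.range N, ∑ m ∈ Finset.range N, chat m * chat n *
        (z ^ (((n : ℤ) * h - m) * k) * z ^ ((-((n : ℤ) * h - m)) * l)) := by
    intro k l
    have e1 : (k : ℝ) / N - (l : ℝ) / N = (((k : ℤ) - l : ℤ) : ℝ) / N := by
      push_cast; ring
    have e2 : c (Int.fract ((h * k : ℝ) / N) - Int.fract ((h * l : ℝ) / N)) =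
        c ((((h : ℤ) * (k - l) : ℤ) : ℝ) / N) := by
      rw [← hPi _ (⌊(h * k : ℝ) / N⌋ - ⌊(h * l : ℝ) / N⌋)]
      congr 1
      simp only [Int.fract]
      push_cast; ring
    rw [e2, e1, Complex.ofReal_mul, hF', hF, Finset.sum_mul_sum, Finset.sum_comm]
    refine Finset.sum_congr rfl fun n _ => Finset.sum_congr rfl fun m _ => ?_
    rw [mul_mul_mul_comm, ← zpow_add₀ hz0, ← zpow_add₀ hz0]
    congr 2
    ring
  have hpull : ((∑ k ∈ Finset.range N, ∑ l ∈ Finset.range N,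
        c ((k : ℝ) / N - (l : ℝ) / N) *
          c (Int.fract ((h * k : ℝ) / N) - Int.fract ((h * l : ℝ) / N)) : ℝ) : ℂ) =
      ∑ n ∈ Finset.range N, ∑ m ∈ Finset.range N, chat m * chat n *
        ((∑ k ∈ Finset.range N, z ^ (((n : ℤ) * h - m) * (k : ℤ))) *
          ∑ l ∈ Finset.range N, z ^ ((-((n : ℤ) * h - m)) * (l : ℤ))) := by
    simp only [Complex.ofReal_sum, hterm]
    rw [Finset.sum_congr rfl fun k _ => Finset.sum_comm, Finset.sum_comm]
    refine Finset.sum_congr rfl fun n _ => ?_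
    rw [Finset.sum_congr rfl fun k _ => Finset.sum_comm, Finset.sum_comm]
    refine Finset.sum_congr rfl fun m _ => ?_
    rw [Finset.sum_mul_sum]
    simp only [Finset.mul_sum]
  rw [hpull, Finset.mul_sum]
  refine Finset.sum_congr rfl fun n _ => ?_
  simp only [aux_geom N z hz, dvd_neg]
  obtain ⟨r, hr⟩ := Int.eq_ofNat_of_zero_le (Int.emod_nonneg ((n : ℤ) * h) hNZ)
  have hrN : r < N := by
    have := Int.emod_lt_of_pos ((n : ℤ) * h) (by exact_mod_cast hN : (0 : ℤ) < N)
    omega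
  have hj : (n : ℤ) * h = r + N * ((n : ℤ) * h / N) := by
    have := Int.emod_add_mul_ediv ((n : ℤ) * h) N
    rw [hr] at this
    exact this.symm
  rw [Finset.sum_eq_single r]
  · have hd : (N : ℤ) ∣ (n : ℤ) * h - r := ⟨(n : ℤ) * h / N, by linarith⟩
    have hch : chat ((h : ℤ) * n) = chat r := by
      rw [mul_comm, hj, mul_comm (N : ℤ), hci]
    rw [if_pos hd, hch]
    ring
  · intro m hm hne
    rw [if_neg]
    · simp
    · intro hd
      apply hne
      have h2 : ((n : ℤ) * h) % N = (m : ℤ) % N := Int.emod_eq_emod_iff_emod_sub_eq_zero.2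
        (Int.emod_eq_zero_of_dvd hd)
      rw [hr, Int.emod_eq_of_lt (by positivity) (by exact_mod_cast Finset.mem_range.1 hm)] at h2
      exact_mod_cast h2.symm
  · intro hnot
    exact absurd (Finset.mem_range.2 hrN) hnot
end

section
/- Let σ > 1 and let f: ℝ → ℝ be 1-periodic, symmetric in the sense f(t) = f(1−t), and α-Hölder continuous for some 0 < α ≤ 1. Then there exist real constants D and K > 0 such that for all sufficiently large n, | (1/F_n^σ) Σ_{m=1}^{F_n−1} f(m/F_n)/|sin(πm/F_n)|^σ · f(F_{n−1}m/F_n)/|sin(πF_{n−1}m/F_n)|^σ − C·n − D | ≤ K · n² / φ^{min{α, σ−1}·n/2}, where C = 2 f(0)² 5^{σ/2} π^{−2σ} Σ_{i=1}^∞ η_i^{−σ}. -/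
open Real

noncomputable def phi : ℝ := (1 + Real.sqrt 5) / 2

noncomputable def W (i : ℕ) : ℕ → ℤ
  | 0 => ⌊phi ^ 2 * (⌊phi * i⌋ : ℝ)⌋ - ⌊phi * (⌊phi * i⌋ : ℝ)⌋
  | 1 => ⌊phi * (⌊phi * i⌋ : ℝ)⌋
  | 2 => ⌊phi ^ 2 * (⌊phi * i⌋ : ℝ)⌋
  | (k + 3) => W i (k + 2) + W i (k + 1)

noncomputable def wplus (i : ℕ) : ℝ := phi⁻¹ ^ 2 * (W i 1 : ℝ) + phi⁻¹ * (W i 2 : ℝ)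

noncomputable def wminus (i : ℕ) : ℝ := phi ^ 2 * (W i 1 : ℝ) - phi * (W i 2 : ℝ)

noncomputable def eta (i : ℕ) : ℝ := -(wplus i * wminus i)

section FibProof

open scoped goldenRatio

section PartA
noncomputable def la (l : ℤ × ℤ) : ℝ := l.2 - l.1 * ψ
noncomputable def lb (l : ℤ × ℤ) : ℝ := l.1 * φ - l.2

def lT : Equiv.Perm (ℤ × ℤ) where
  toFun l := (l.2, l.1 + l.2)
  invFun l := (l.2 - l.1, l.1)
  left_inv l := by ext <;> simp
  right_inv l := by ext <;> simp

def lR : Equiv.Perm (ℤ × ℤ) where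
  toFun l := (-l.1, l.2 - l.1)
  invFun l := (-l.1, l.2 - l.1)
  left_inv l := by ext <;> simp
  right_inv l := by ext <;> simp

lemma la_lR (l) : la (lR l) = - lb l := by
  simp only [la, lb, lR, Equiv.coe_fn_mk]; push_cast
  linear_combination (-(l.1:ℝ)) * goldenRatio_add_goldenConj * (-1)

lemma lb_lR (l) : lb (lR l) = - la l := by
  simp only [la, lb, lR, Equiv.coe_fn_mk]; push_cast
  linear_combination (-(l.1:ℝ)) * goldenRatio_add_goldenConj

lemma la_lT (l) : la (lT l) = φ * la l := by
  simp only [la, lT, Equiv.coe_fn_mk]; push_cast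
  linear_combination (l.1 : ℝ) * goldenRatio_mul_goldenConj - (l.2 : ℝ) * goldenRatio_add_goldenConj

lemma lb_lT (l) : lb (lT l) = ψ * lb l := by
  simp only [lb, lT, Equiv.coe_fn_mk]; push_cast
  linear_combination (-(l.1 : ℝ)) * goldenRatio_mul_goldenConj + (l.2 : ℝ) * goldenRatio_add_goldenConj

lemma la_lTk (k : ℤ) (l) : la ((lT ^ k) l) = φ ^ k * la l := by
  induction k using Int.induction_on generalizing l with
  | zero => simp
  | succ n ih =>
    rw [zpow_add_one, Equiv.Perm.mul_apply, ih, la_lT, zpow_add_one₀ goldenRatio_ne_zero]; ring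
  | pred n ih =>
    rw [zpow_sub_one, Equiv.Perm.mul_apply, ih, zpow_sub_one₀ goldenRatio_ne_zero]
    have := la_lT (lT⁻¹ l)
    rw [← Equiv.Perm.mul_apply, mul_inv_cancel, Equiv.Perm.one_apply] at this
    rw [this, mul_assoc, inv_mul_cancel_left₀ goldenRatio_ne_zero]

lemma lb_lTk (k : ℤ) (l) : lb ((lT ^ k) l) = ψ ^ k * lb l := by
  induction k using Int.induction_on generalizing l with
  | zero => simp
  | succ n ih =>
    rw [zpow_add_one, Equiv.Perm.mul_apply, ih, lb_lT, zpow_add_one₀ goldenConj_ne_zero]; ring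
  | pred n ih =>
    rw [zpow_sub_one, Equiv.Perm.mul_apply, ih, zpow_sub_one₀ goldenConj_ne_zero]
    have := lb_lT (lT⁻¹ l)
    rw [← Equiv.Perm.mul_apply, mul_inv_cancel, Equiv.Perm.one_apply] at this
    rw [this, mul_assoc, inv_mul_cancel_left₀ goldenConj_ne_zero]

lemma abs_conj_zpow (k : ℤ) : |ψ ^ k| = φ ^ (-k) := by
  have : ψ = - φ⁻¹ := by rw [inv_goldenRatio]; ring
  rw [this, abs_zpow, abs_neg, abs_of_pos (inv_pos.2 goldenRatio_pos), inv_zpow, zpow_neg]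

lemma la_mul_lb (l : ℤ × ℤ) : la l * lb l = ((l.1 * l.1 + l.1 * l.2 - l.2 * l.2 : ℤ) : ℝ) := by
  simp only [la, lb]; push_cast
  linear_combination (-(l.1:ℝ)^2) * goldenRatio_mul_goldenConj + (l.1 : ℝ) * l.2 * goldenRatio_add_goldenConj

lemma la_ne {l : ℤ × ℤ} (h : l ≠ 0) : la l ≠ 0 := by
  intro h0
  by_cases h1 : l.1 = 0
  · apply h
    have : (l.2 : ℝ) = 0 := by simpa [la, h1] using h0
    ext
    · exact h1
    · exact_mod_cast this
  · have hi := goldenConj_irrational.ratCast_mul (q := (l.1 : ℚ)) (by exact_mod_cast h1)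
    apply hi
    refine ⟨l.2, ?_⟩
    simp only [la] at h0
    push_cast; linarith

lemma lb_ne {l : ℤ × ℤ} (h : l ≠ 0) : lb l ≠ 0 := by
  have : lR l ≠ 0 := by
    intro h1; apply h
    have := congrArg lR h1
    simp only [lR, Equiv.coe_fn_mk, Prod.ext_iff] at this h1 ⊢
    simp at this h1 ⊢; omega
  have := la_ne this
  rw [la_lR] at this; simpa using this

lemma lab_ge {l : ℤ × ℤ} (h : l ≠ 0) : 1 ≤ |la l * lb l| := by
  have h1 : la l * lb l ≠ 0 := mul_ne_zero (la_ne h) (lb_ne h)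
  rw [la_mul_lb] at h1 ⊢
  have h2 := Int.one_le_abs (Int.cast_ne_zero.1 h1)
  exact_mod_cast h2

lemma lab_lTk (k : ℤ) (l) : |la ((lT ^ k) l) * lb ((lT ^ k) l)| = |la l * lb l| := by
  rw [la_lTk, lb_lTk, abs_mul, abs_mul, abs_mul, abs_mul, abs_conj_zpow, abs_zpow,
    abs_of_pos goldenRatio_pos]
  have : φ ^ k * φ ^ (-k) = 1 := by rw [← zpow_add₀ goldenRatio_ne_zero]; simp
  linear_combination |la l| * |lb l| * this

lemma la_add_lb (l) : la l + lb l = √5 * l.1 := by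
  simp only [la, lb]
  linear_combination (l.1 : ℝ) * goldenRatio_sub_goldenConj

lemma la_zero : la 0 = 0 := by simp [la]
lemma lb_zero : lb 0 = 0 := by simp [lb]
lemma la_neg (l) : la (-l) = - la l := by simp [la]; ring
lemma lb_neg (l) : lb (-l) = - lb l := by simp [lb]; ring

/-- representatives -/
noncomputable def rep (i : ℕ) : ℤ × ℤ := (i, ⌊((i : ℝ) + 1) * φ⌋)

lemma rep_b (i : ℕ) : -φ < lb (rep i) ∧ lb (rep i) < - φ⁻¹ := by
  have h1 := Int.lt_floor_add_one (((i : ℝ) + 1) * φ)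
  have h2 := Int.floor_le (((i : ℝ) + 1) * φ)
  have h3 : φ⁻¹ = φ - 1 := by rw [inv_goldenRatio]; linarith [goldenRatio_add_goldenConj]
  have h4 : ((i : ℝ) + 1) * φ ≠ ⌊((i : ℝ) + 1) * φ⌋ := by
    intro h
    have hi := goldenRatio_irrational.ratCast_mul (q := ((i : ℚ) + 1)) (by positivity)
    apply hi
    refine ⟨⌊((i : ℝ) + 1) * φ⌋, ?_⟩
    push_cast; exact h.symm
  have h5 := lt_of_le_of_ne h2 (Ne.symm h4)
  simp only [lb, rep]; push_cast
  rw [h3]; constructor <;> linarith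

lemma rep_a (i : ℕ) : (i : ℝ) + 1 ≤ la (rep i) := by
  have h1 := Int.lt_floor_add_one (((i : ℝ) + 1) * φ)
  have h3 : ψ < 0 := goldenConj_neg
  have h4 := one_lt_goldenRatio
  have h5 : ((i : ℤ) + 1) ≤ ⌊((i : ℝ) + 1) * φ⌋ := by
    apply Int.le_floor.2; push_cast; nlinarith [(Nat.cast_nonneg i : (0:ℝ) ≤ i)]
  have h6 : ((i : ℝ) + 1) ≤ (⌊((i : ℝ) + 1) * φ⌋ : ℝ) := by exact_mod_cast h5
  simp only [la, rep]; push_cast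
  nlinarith [(Nat.cast_nonneg i : (0:ℝ) ≤ i)]

noncomputable def nrm (i : ℕ) : ℝ := |la (rep i) * lb (rep i)|

lemma nrm_ge (i : ℕ) : ((i : ℝ) + 1) / 2 ≤ nrm i := by
  have h1 := rep_a i
  have h2 := rep_b i
  have h3 : (1:ℝ)/2 ≤ φ⁻¹ := by
    rw [one_div]; exact inv_anti₀ goldenRatio_pos goldenRatio_lt_two.le
  rw [nrm, abs_mul]
  have h4 : (1:ℝ)/2 ≤ |lb (rep i)| := by rw [abs_of_neg (by linarith)]; linarith
  have h5 : (i : ℝ) + 1 ≤ |la (rep i)| := h1.trans (le_abs_self _)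
  have : (0:ℝ) ≤ i := Nat.cast_nonneg i
  nlinarith

lemma nrm_pos (i : ℕ) : 0 < nrm i := lt_of_lt_of_le (by positivity) (nrm_ge i)

lemma nrm_summable {τ : ℝ} (h : 1 < τ) : Summable fun i => nrm i ^ (-τ) := by
  have h1 : Summable fun i : ℕ => ((i : ℝ) + 1) ^ (-τ) := by
    have := (Real.summable_nat_rpow (p := -τ)).2 (by linarith)
    have := (summable_nat_add_iff 1).2 this
    simpa using this
  refine Summable.of_nonneg_of_le (fun i => by have := nrm_pos i; positivity) (fun i => ?_) (h1.mul_left ((1/2)^(-τ)))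
  rw [← Real.mul_rpow (by norm_num) (by positivity)]
  apply Real.rpow_le_rpow_of_nonpos (by positivity) _ (by linarith)
  have := nrm_ge i; linarith

end PartA

section PartB
noncomputable def enum (x : ℕ × ℤ × ℤˣ) : ℤ × ℤ := ((x.2.2 : ℤ)) • (lT ^ x.2.1) (rep x.1)

lemma units_abs (s : ℤˣ) : |((s : ℤ) : ℝ)| = 1 := by
  rcases Int.units_eq_one_or s with h | h <;> simp [h]

lemma la_smul (s : ℤ) (l) : la (s • l) = s * la l := by simp [la]; ring
lemma lb_smul (s : ℤ) (l) : lb (s • l) = s * lb l := by simp [lb]; ring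

lemma la_enum (i k s) : la (enum (i, k, s)) = (s : ℤ) * (φ ^ k * la (rep i)) := by
  simp only [enum]; rw [la_smul, la_lTk]
lemma lb_enum (i k s) : lb (enum (i, k, s)) = (s : ℤ) * (ψ ^ k * lb (rep i)) := by
  simp only [enum]; rw [lb_smul, lb_lTk]

lemma lab_inj {l m : ℤ × ℤ} (h1 : la l = la m) (h2 : lb l = lb m) : l = m := by
  have h5 : (0:ℝ) < √5 := by positivity
  have e1 : (l.1 : ℝ) = m.1 := by
    have := la_add_lb l; have := la_add_lb m
    have : √5 * (l.1 : ℝ) = √5 * m.1 := by linarith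
    exact mul_left_cancel₀ h5.ne' this
  have e2 : (l.2 : ℝ) = m.2 := by
    simp only [lb, e1] at h2; linarith
  ext
  · exact_mod_cast e1
  · exact_mod_cast e2

lemma conj_zpow_sign (k : ℤ) : ψ ^ k = (-1) ^ k * φ ^ (-k) := by
  have : ψ = (-1) * φ⁻¹ := by rw [inv_goldenRatio]; ring
  rw [this, mul_zpow, inv_zpow, zpow_neg]

lemma phi_zpow_mul (k : ℤ) : φ ^ k * φ ^ (-k) = 1 := by
  rw [← zpow_add₀ goldenRatio_ne_zero]; simp

lemma enum_inj : Function.Injective enum := by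
  rintro ⟨i, k, s⟩ ⟨j, m, t⟩ h
  have ha := congrArg la h
  have hb := congrArg lb h
  rw [la_enum, la_enum] at ha
  rw [lb_enum, lb_enum] at hb
  have hs := units_abs s
  have ht := units_abs t
  have gp := goldenRatio_pos
  have a1 := rep_a i
  have a2 := rep_a j
  have b1 := rep_b i
  have b2 := rep_b j
  have hip := inv_pos.2 gp
  have i0 : (0:ℝ) ≤ i := Nat.cast_nonneg i
  have j0 : (0:ℝ) ≤ j := Nat.cast_nonneg j
  -- sign s
  have hst : s = t := by
    have p1 : 0 < φ ^ k * la (rep i) := mul_pos (zpow_pos gp _) (by linarith)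
    have p2 : 0 < φ ^ m * la (rep j) := mul_pos (zpow_pos gp _) (by linarith)
    rcases Int.units_eq_one_or s with h | h <;> rcases Int.units_eq_one_or t with h' | h' <;>
      simp [h, h'] at ha ⊢ <;> linarith
  subst hst
  have hs0 : ((s : ℤ) : ℝ) ≠ 0 := by intro h; rw [h] at hs; simp at hs
  have ha' := mul_left_cancel₀ hs0 ha
  have hb' := mul_left_cancel₀ hs0 hb
  have habs : φ ^ (-k) * (-lb (rep i)) = φ ^ (-m) * (-lb (rep j)) := by
    have := congrArg abs hb'
    rwa [abs_mul, abs_mul, abs_conj_zpow, abs_conj_zpow, abs_of_neg (a := lb (rep i)) (by linarith),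
      abs_of_neg (a := lb (rep j)) (by linarith)] at this
  have key : ∀ (i j : ℕ) (k m : ℤ), φ ^ (-k) * (-lb (rep i)) = φ ^ (-m) * (-lb (rep j)) →
      k < m + 2 := by
    intro i j k m h
    have b1 := rep_b i
    have b2 := rep_b j
    by_contra hcon
    have h1 : φ ^ (-k) ≤ φ ^ (-m) * φ⁻¹ ^ 2 := by
      have : φ ^ (-m) * φ⁻¹ ^ 2 = φ ^ (-m - 2) := by
        rw [zpow_sub₀ goldenRatio_ne_zero, inv_pow, div_eq_mul_inv]; norm_cast
      rw [this]
      exact zpow_le_zpow_right₀ one_lt_goldenRatio.le (by omega)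
    have h2 : φ ^ (-k) * (-lb (rep i)) < φ ^ (-m) * φ⁻¹ := by
      calc φ ^ (-k) * (-lb (rep i)) < φ ^ (-k) * φ :=
            mul_lt_mul_of_pos_left (by linarith) (zpow_pos gp _)
        _ ≤ φ ^ (-m) * φ⁻¹ ^ 2 * φ := mul_le_mul_of_nonneg_right h1 gp.le
        _ = φ ^ (-m) * φ⁻¹ := by field_simp
    have h3 : φ ^ (-m) * φ⁻¹ < φ ^ (-m) * (-lb (rep j)) :=
      mul_lt_mul_of_pos_left (by linarith) (zpow_pos gp _)
    linarith
  have k1 := key i j k m habs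
  have k2 := key j i m k habs.symm
  have hkm : k = m := by
    have hsgn : ((-1:ℝ) ^ k) = (-1) ^ m := by
      rw [conj_zpow_sign, conj_zpow_sign] at hb'
      have : ((-1:ℝ) ^ k) * (φ ^ (-k) * (-lb (rep i))) = (-1) ^ m * (φ ^ (-k) * (-lb (rep i))) := by
        nth_rewrite 2 [habs]; linarith
      exact mul_right_cancel₀ (by
        have : 0 < φ ^ (-k) * (-lb (rep i)) := mul_pos (zpow_pos gp _) (by linarith)
        exact this.ne') this
    have h3 : k = m + 1 ∨ k = m ∨ m = k + 1 := by omega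
    have hne : ∀ m : ℤ, ((-1:ℝ) ^ (m+1)) ≠ (-1) ^ m := by
      intro m h
      rw [zpow_add_one₀ (by norm_num)] at h
      have : ((-1:ℝ) ^ m) ≠ 0 := zpow_ne_zero _ (by norm_num)
      apply this; linarith
    rcases h3 with h | h | h
    · exact absurd (h ▸ hsgn) (hne m)
    · exact h
    · exact absurd (h ▸ hsgn.symm) (hne k)
  subst hkm
  have e1 := mul_left_cancel₀ (zpow_ne_zero k goldenRatio_ne_zero) ha'
  have e2 := mul_left_cancel₀ (zpow_ne_zero k goldenConj_ne_zero) hb'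
  have := lab_inj e1 e2
  have := congrArg Prod.fst this
  simp only [rep] at this
  have : i = j := by exact_mod_cast this
  subst this; rfl

lemma rep_of {l : ℤ × ℤ} (ha : 0 < la l) (h1 : -φ < lb l) (h2 : lb l ≤ - φ⁻¹) :
    ∃ i, rep i = l := by
  have h3 : φ⁻¹ = φ - 1 := by rw [inv_goldenRatio]; linarith [goldenRatio_add_goldenConj]
  have hs := la_add_lb l
  have h5 : 2 < √5 := by
    rw [Real.lt_sqrt (by norm_num)]; norm_num
  have g2 := goldenRatio_lt_two
  have hc : -1 < l.1 := by
    by_contra hcon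
    have : (l.1 : ℝ) ≤ -1 := by exact_mod_cast (not_lt.1 hcon)
    nlinarith
  refine ⟨l.1.toNat, ?_⟩
  have hz : ((l.1.toNat : ℤ)) = l.1 := Int.toNat_of_nonneg (by omega)
  have hz' : ((l.1.toNat : ℝ)) = l.1 := by exact_mod_cast hz
  simp only [rep]
  ext
  · exact hz
  · simp only
    rw [hz', Int.floor_eq_iff]
    simp only [lb] at h1 h2
    rw [h3] at h2
    refine ⟨by linarith, ?_⟩
    by_contra hcon
    have heq : (l.1 + 1 : ℝ) * φ = l.2 + 1 := by linarith
    have hi := goldenRatio_irrational.ratCast_mul (q := ((l.1 : ℚ) + 1)) (by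
      have : (0:ℚ) ≤ l.1 := by exact_mod_cast (by omega : 0 ≤ l.1)
      positivity)
    apply hi
    refine ⟨l.2 + 1, ?_⟩
    push_cast; exact heq.symm

lemma enum_surj {l : ℤ × ℤ} (hl : l ≠ 0) : ∃ x, enum x = l := by
  have gp := goldenRatio_pos
  have ha := la_ne hl
  have hb := lb_ne hl
  obtain ⟨k, hk1, hk2⟩ := exists_mem_Ico_zpow (abs_pos.2 hb) one_lt_goldenRatio
  -- main step: any q with a(q) b(q) < 0 and |b| in range
  have main : ∀ k : ℤ, la ((lT ^ k) l) * lb ((lT ^ k) l) < 0 → |lb ((lT ^ k) l)| < φ →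
      φ⁻¹ ≤ |lb ((lT ^ k) l)| → ∃ x, enum x = l := by
    intro k hneg hlt hge
    have inv : ∀ m : ℤ × ℤ, (lT ^ (-k)) ((lT ^ k) m) = m := by
      intro m
      rw [← Equiv.Perm.mul_apply, ← zpow_add]; simp
    rcases lt_or_ge 0 (la ((lT ^ k) l)) with h | h
    · have hbn : lb ((lT ^ k) l) < 0 := by
        by_contra hc; nlinarith [not_lt.1 hc]
      rw [abs_of_neg hbn] at hlt hge
      obtain ⟨i, hi⟩ := rep_of h (by linarith) (by linarith)
      refine ⟨(i, -k, 1), ?_⟩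
      simp only [enum]
      rw [hi, inv]; simp
    · have hbn : 0 < lb ((lT ^ k) l) := by
        by_contra hc; nlinarith [not_lt.1 hc]
      rw [abs_of_pos hbn] at hlt hge
      have han : la ((lT ^ k) l) ≠ 0 := by intro h0; rw [h0] at hneg; simp at hneg
      obtain ⟨i, hi⟩ := rep_of (l := -(lT ^ k) l) (by rw [la_neg]; have := lt_of_le_of_ne h han; linarith)
        (by rw [lb_neg]; linarith) (by rw [lb_neg]; linarith)
      refine ⟨(i, -k, -1), ?_⟩
      apply lab_inj
      · simp only [enum]
        rw [hi, la_smul, la_lTk, la_neg, la_lTk]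
        have := phi_zpow_mul k
        push_cast; linear_combination (la l) * this
      · simp only [enum]
        rw [hi, lb_smul, lb_lTk, lb_neg, lb_lTk]
        have : ψ ^ k * ψ ^ (-k) = 1 := by rw [← zpow_add₀ goldenConj_ne_zero]; simp
        push_cast; linear_combination (lb l) * this
  have hbk : ∀ k : ℤ, |lb ((lT ^ k) l)| = φ ^ (-k) * |lb l| := by
    intro k; rw [lb_lTk, abs_mul, abs_conj_zpow]
  have hpk := zpow_pos gp (-k)
  have r1 : 1 ≤ φ ^ (-k) * |lb l| := by
    have := mul_le_mul_of_nonneg_left hk1 hpk.le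
    rw [mul_comm, phi_zpow_mul] at this; exact this
  have r2 : φ ^ (-k) * |lb l| < φ := by
    have := mul_lt_mul_of_pos_left hk2 hpk
    rw [zpow_add_one₀ goldenRatio_ne_zero] at this
    have h3 := phi_zpow_mul k
    calc _ < _ := this
      _ = φ := by linear_combination φ * h3
  have hig : φ⁻¹ < 1 := inv_lt_one_of_one_lt₀ one_lt_goldenRatio
  rcases lt_or_ge (la ((lT ^ k) l) * lb ((lT ^ k) l)) 0 with h | h
  · exact main k h (by rw [hbk]; exact r2) (by rw [hbk]; linarith)
  · have e : lb ((lT ^ (k+1)) l) = ψ * lb ((lT ^ k) l) := by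
      rw [lb_lTk, lb_lTk, zpow_add_one₀ goldenConj_ne_zero]; ring
    have e' : la ((lT ^ (k+1)) l) = φ * la ((lT ^ k) l) := by
      rw [la_lTk, la_lTk, zpow_add_one₀ goldenRatio_ne_zero]; ring
    have hne : la ((lT ^ k) l) * lb ((lT ^ k) l) ≠ 0 := by
      intro h0
      have := lab_lTk k l
      rw [h0] at this
      have h1 := lab_ge hl
      rw [← this] at h1; norm_num at h1
    have hpos := lt_of_le_of_ne h hne.symm
    have q : φ ^ (-(k+1)) * |lb l| = φ⁻¹ * (φ ^ (-k) * |lb l|) := by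
      rw [show -(k+1) = -k - 1 by ring, zpow_sub_one₀ goldenRatio_ne_zero]; ring
    have hip := inv_pos.2 gp
    refine main (k+1) ?_ ?_ ?_
    · rw [e, e']
      have : φ * la ((lT ^ k) l) * (ψ * lb ((lT ^ k) l)) = - (la ((lT ^ k) l) * lb ((lT ^ k) l)) := by
        linear_combination (la ((lT ^ k) l) * lb ((lT ^ k) l)) * goldenRatio_mul_goldenConj
      rw [this]; linarith
    · rw [hbk, q]; nlinarith
    · rw [hbk, q]; nlinarith

end PartB

section PartC
structure Prof (U : ℝ → ℝ) (u : ℕ → ℝ) : Prop where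
  nonneg : ∀ t, 0 ≤ U t
  zero : ∀ t, 1 ≤ t → U t = 0
  le : ∀ (j : ℕ) t, φ⁻¹ ^ (j + 1) ≤ t → t < φ⁻¹ ^ j → U t ≤ u j
  unn : ∀ j, 0 ≤ u j
  summ : Summable u

lemma orbit_sum {U u} (H : Prof U u) {x : ℝ} (hx : 0 < x) :
    Summable (fun k : ℤ => U (φ ^ k * x)) ∧ ∑' k : ℤ, U (φ ^ k * x) ≤ ∑' j, u j := by
  have gp := goldenRatio_pos
  obtain ⟨m, hm1, hm2⟩ := exists_mem_Ico_zpow hx one_lt_goldenRatio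
  let g : ℕ → ℤ := fun j => - m - 1 - j
  have hg : Function.Injective g := by intro a b h; simp only [g] at h; omega
  have key : ∀ r : ℤ, φ ^ (r - m) * x ≥ φ ^ r ∧ φ ^ (r - m) * x < φ ^ (r + 1) := by
    intro r
    have h := zpow_pos gp (r - m)
    constructor
    · calc φ ^ r = φ ^ (r - m) * φ ^ m := by rw [← zpow_add₀ goldenRatio_ne_zero]; simp
        _ ≤ _ := mul_le_mul_of_nonneg_left hm1 h.le
    · calc φ ^ (r - m) * x < φ ^ (r - m) * φ ^ (m + 1) := mul_lt_mul_of_pos_left hm2 h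
        _ = _ := by rw [← zpow_add₀ goldenRatio_ne_zero]; congr 1; ring
  have hsupp : Function.support (fun k : ℤ => U (φ ^ k * x)) ⊆ Set.range g := by
    intro k hk
    by_contra hn
    apply hk
    have : - m ≤ k := by
      by_contra hc
      apply hn
      exact ⟨(-m - 1 - k).toNat, by simp only [g]; rw [Int.toNat_of_nonneg (by omega)]; ring⟩
    apply H.zero
    have h1 := (key (k + m)).1
    rw [show k + m - m = k by ring] at h1
    exact (one_le_zpow₀ one_lt_goldenRatio.le (by omega : 0 ≤ k + m)).trans h1
  have hle : ∀ j, U (φ ^ (g j) * x) ≤ u j := by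
    intro j
    have h := key (-1 - j)
    rw [show (-1 - (j:ℤ) - m) = g j by simp only [g]; ring] at h
    apply H.le
    · have e : φ⁻¹ ^ (j+1) = φ ^ (-1 - (j:ℤ)) := by
        rw [← zpow_natCast, inv_zpow']; congr 1; push_cast; ring
      rw [e]; exact h.1
    · have e : φ⁻¹ ^ j = φ ^ (-1 - (j:ℤ) + 1) := by
        rw [← zpow_natCast, inv_zpow']; congr 1; ring
      rw [e]; exact h.2
  have hs : Summable (fun j => U (φ ^ (g j) * x)) :=
    Summable.of_nonneg_of_le (fun _ => H.nonneg _) hle H.summ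
  refine ⟨(hg.summable_iff (fun k hk => ?_)).1 hs, ?_⟩
  · by_contra hc; exact hk (hsupp hc)
  · rw [← hg.tsum_eq hsupp]
    exact hs.tsum_le_tsum hle H.summ

lemma nrm_enum (i k s) : |la (enum (i, k, s)) * lb (enum (i, k, s))| = nrm i := by
  rw [la_enum, lb_enum, nrm]
  have := lab_lTk k (rep i)
  rw [la_lTk, lb_lTk] at this
  rw [← this]
  simp only [abs_mul, units_abs, one_mul]

lemma enum_ne_zero (x) : enum x ≠ 0 := by
  obtain ⟨i, k, s⟩ := x
  intro h
  have h1 := nrm_enum i k s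
  rw [h, la_zero, lb_zero] at h1
  have := nrm_pos i
  simp at h1; linarith

lemma abs_la_enum (i k s) : |la (enum (i, k, s))| = φ ^ k * la (rep i) := by
  have h : 0 < la (rep i) := lt_of_lt_of_le (by positivity) (rep_a i)
  rw [la_enum, abs_mul, units_abs, one_mul, abs_of_pos (mul_pos (zpow_pos goldenRatio_pos _) h)]

lemma supp_enum {F : ℤ × ℤ → ℝ} (h0 : F 0 = 0) : Function.support F ⊆ Set.range enum := by
  intro l hl
  exact enum_surj (by rintro rfl; exact hl h0)

lemma lattice_sum {U u} (H : Prof U u) {τ : ℝ} (hτ : 1 < τ) {F : ℤ × ℤ → ℝ} (h0 : F 0 = 0)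
    (hF : ∀ l, l ≠ 0 → |F l| ≤ U |la l| * |la l * lb l| ^ (-τ)) :
    Summable F ∧ ∑' l, |F l| ≤ 2 * (∑' i, nrm i ^ (-τ)) * ∑' j, u j := by
  let W : ℕ × (ℤ × ℤˣ) → ℝ := fun x => nrm x.1 ^ (-τ) * U (φ ^ x.2.1 * la (rep x.1))
  have hn : ∀ i, 0 ≤ nrm i ^ (-τ) := fun i => by have := nrm_pos i; positivity
  have hpos : ∀ i, 0 < la (rep i) := fun i => lt_of_lt_of_le (by positivity) (rep_a i)
  have hW0 : 0 ≤ W := fun x => mul_nonneg (hn _) (H.nonneg _)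
  have hin : ∀ i, HasSum (fun y => W (i, y)) (nrm i ^ (-τ) * (2 * ∑' k : ℤ, U (φ ^ k * la (rep i)))) := by
    intro i
    have h1 := (orbit_sum H (hpos i)).1
    have h2 : Summable (fun y : ℤ × ℤˣ => U (φ ^ y.1 * la (rep i)) * (1:ℝ)) :=
      h1.mul_of_nonneg (g := fun _ : ℤˣ => (1:ℝ)) (Summable.of_finite) (fun _ => H.nonneg _) (fun _ => zero_le_one)
    have h3 : HasSum (fun y : ℤ × ℤˣ => U (φ ^ y.1 * la (rep i)) * (1:ℝ))
        ((∑' k : ℤ, U (φ ^ k * la (rep i))) * 2) := by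
      have := HasSum.mul (h1.hasSum) (g := fun _ : ℤˣ => (1:ℝ)) (t := 2) (by
        have := hasSum_fintype (fun _ : ℤˣ => (1:ℝ))
        simpa using this) h2
      exact this
    have h4 := h3.mul_left (nrm i ^ (-τ))
    simp only [mul_one] at h4
    simpa only [W, mul_comm (2:ℝ)] using h4
  have hle : ∀ i, nrm i ^ (-τ) * (2 * ∑' k : ℤ, U (φ ^ k * la (rep i))) ≤
      nrm i ^ (-τ) * (2 * ∑' j, u j) := fun i =>
    mul_le_mul_of_nonneg_left (by have := (orbit_sum H (hpos i)).2; linarith) (hn i)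
  have hs2 : Summable fun i => nrm i ^ (-τ) * (2 * ∑' j, u j) := (nrm_summable hτ).mul_right _
  have hs1 : Summable fun i => nrm i ^ (-τ) * (2 * ∑' k : ℤ, U (φ ^ k * la (rep i))) :=
    Summable.of_nonneg_of_le (fun i => mul_nonneg (hn i) (mul_nonneg zero_le_two
      (tsum_nonneg fun _ => H.nonneg _))) hle hs2
  have hWs : Summable W := by
    refine (summable_prod_of_nonneg hW0).2 ⟨fun i => (hin i).summable, ?_⟩
    simpa only [(hin _).tsum_eq] using hs1
  have hWt : ∑' x, W x ≤ 2 * (∑' i, nrm i ^ (-τ)) * ∑' j, u j := by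
    rw [hWs.tsum_prod]
    simp only [(hin _).tsum_eq]
    refine (hs1.tsum_le_tsum hle hs2).trans (le_of_eq ?_)
    rw [tsum_mul_right]; ring
  have hFW : ∀ x, |F (enum x)| ≤ W x := by
    rintro ⟨i, k, s⟩
    have := hF _ (enum_ne_zero (i, k, s))
    rw [nrm_enum, abs_la_enum] at this
    simp only [W]; linarith
  have habs : Summable fun x => |F (enum x)| := Summable.of_nonneg_of_le (fun _ => abs_nonneg _) hFW hWs
  have h0' : (fun l => |F l|) 0 = 0 := by simp [h0]
  have hsupp := supp_enum (F := fun l => |F l|) h0'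
  constructor
  · have : Summable fun l => |F l| := (enum_inj.summable_iff (fun k hk => by
      by_contra hc; exact hk (hsupp hc))).1 habs
    exact this.of_abs
  · rw [← enum_inj.tsum_eq hsupp]
    exact (habs.tsum_le_tsum hFW hWs).trans hWt

/-- power profile -/
lemma prof_pow {s : ℝ} (hs : 0 < s) :
    Prof (fun t => if 0 ≤ t ∧ t < 1 then t ^ s else 0) (fun j => (φ⁻¹ ^ s) ^ j) where
  nonneg t := by split_ifs with h; exacts [Real.rpow_nonneg h.1 _, le_rfl]
  zero t ht := if_neg (by intro h; linarith [h.2])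
  le j t h1 h2 := by
    have hp := inv_pos.2 goldenRatio_pos
    have : 0 ≤ t := (pow_pos hp _).le.trans h1
    split_ifs
    · rw [← Real.rpow_natCast, ← Real.rpow_mul hp.le, mul_comm, Real.rpow_mul hp.le, Real.rpow_natCast]
      exact Real.rpow_le_rpow this h2.le hs.le
    · positivity
  unn j := by have hp := inv_pos.2 goldenRatio_pos; positivity
  summ := by
    have hp := inv_pos.2 goldenRatio_pos
    exact summable_geometric_of_lt_one (by positivity)
      (Real.rpow_lt_one hp.le (inv_lt_one_of_one_lt₀ one_lt_goldenRatio) hs)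

lemma prof_cut (n : ℕ) :
    Prof (fun t => if φ⁻¹ ^ n < t ∧ t < 1 then 1 else 0) (fun j => if j < n then 1 else 0) where
  nonneg t := by split_ifs <;> norm_num
  zero t ht := if_neg (by intro h; linarith [h.2])
  le j t h1 h2 := by
    split_ifs with h h'
    · exact le_rfl
    · exfalso
      have hp := inv_pos.2 goldenRatio_pos
      have := pow_le_pow_of_le_one hp.le (inv_lt_one_of_one_lt₀ one_lt_goldenRatio).le (not_lt.1 h')
      linarith [h.1]
    · norm_num
    · norm_num
  unn j := by split_ifs <;> norm_num
  summ := summable_of_hasFiniteSupport ((Set.finite_lt_nat n).subset (by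
    intro j hj; by_contra hc; exact hj (if_neg hc)))

lemma cut_tsum (n : ℕ) : ∑' j : ℕ, (if j < n then (1:ℝ) else 0) = n := by
  rw [tsum_eq_sum (s := Finset.range n) (fun j hj => if_neg (by simpa using hj))]
  rw [Finset.sum_congr rfl (fun j hj => if_pos (Finset.mem_range.1 hj))]; simp

end PartC

section PartD
structure HF (h : ℝ → ℝ) (α M L : ℝ) : Prop where
  M0 : 0 ≤ M
  L0 : 0 ≤ L
  bd : ∀ t, |h t| ≤ M
  supp : ∀ t, 2 / 3 ≤ |t| → h t = 0
  hol : ∀ s t, |h s - h t| ≤ L * |s - t| ^ α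
  even : ∀ t, h (-t) = h t

lemma pow_lip (e : ℝ) : ∃ C : ℝ, 0 ≤ C ∧ ∀ t ∈ Set.Icc (1/2 : ℝ) 2, |t ^ e - 1| ≤ C * |t - 1| := by
  have hc : ContinuousOn (fun t : ℝ => e * t ^ (e - 1)) (Set.Icc (1/2 : ℝ) 2) := by
    apply ContinuousOn.mul continuousOn_const
    apply ContinuousOn.rpow_const continuousOn_id
    intro x hx; left; have := hx.1; simp only [id]; linarith
  obtain ⟨C, hC⟩ := isCompact_Icc.exists_bound_of_continuousOn hc
  have h1 : (1:ℝ) ∈ Set.Icc (1/2 : ℝ) 2 := by constructor <;> norm_num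
  refine ⟨C, (norm_nonneg _).trans (hC 1 h1), fun t ht => ?_⟩
  have := Convex.norm_image_sub_le_of_norm_hasDerivWithin_le (f := fun t : ℝ => t ^ e)
    (f' := fun t => e * t ^ (e - 1)) (s := Set.Icc (1/2 : ℝ) 2) (C := C)
    (fun x hx => (Real.hasDerivAt_rpow_const (Or.inl (by have := hx.1; linarith))).hasDerivWithinAt)
    hC (convex_Icc _ _) h1 ht
  simpa [Real.norm_eq_abs] using this

lemma inv_pow_diff (σ : ℝ) : ∃ C : ℝ, 0 ≤ C ∧ ∀ x y : ℝ, y ≠ 0 → |x| ≤ 2 * |y| → |y| ≤ 2 * |x| →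
    |(|x| ^ (-σ)) - |y| ^ (-σ)| ≤ C * (|x - y| / |y|) * |y| ^ (-σ) := by
  obtain ⟨C, hC0, hC⟩ := pow_lip (-σ)
  refine ⟨C, hC0, fun x y hy h1 h2 => ?_⟩
  have hyp : 0 < |y| := abs_pos.2 hy
  have ht : |x| / |y| ∈ Set.Icc (1/2 : ℝ) 2 := by
    constructor
    · rw [le_div_iff₀ hyp]; linarith
    · rw [div_le_iff₀ hyp]; linarith
  have h := hC _ ht
  have e : |x| ^ (-σ) = (|x| / |y|) ^ (-σ) * |y| ^ (-σ) := by
    rw [← Real.mul_rpow (by positivity) hyp.le]; congr 1; field_simp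
  have hp : 0 ≤ |y| ^ (-σ) := by positivity
  rw [e, show (|x| / |y|) ^ (-σ) * |y| ^ (-σ) - |y| ^ (-σ) = ((|x| / |y|) ^ (-σ) - 1) * |y| ^ (-σ) by ring,
    abs_mul, abs_of_nonneg hp]
  apply mul_le_mul_of_nonneg_right _ hp
  refine h.trans (mul_le_mul_of_nonneg_left ?_ hC0)
  rw [show |x| / |y| - 1 = (|x| - |y|) / |y| by field_simp, abs_div, abs_abs]
  exact div_le_div_of_nonneg_right (abs_abs_sub_abs_le x y) hyp.le

noncomputable def Psi (h : ℝ → ℝ) (σ ε q p b X Y : ℝ) : ℝ :=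
  (1 - q) ^ σ * h (ε * X / (1 - q)) * h (ε * Y / (1 - q)) * |X| ^ (-σ) * |Y| ^ (-σ)
    - h (ε * p) * h (ε * b) * |b| ^ (-σ) * |p| ^ (-σ)
    - h 0 * h (ε * p) * (|X| ^ (-σ) - |b| ^ (-σ)) * |p| ^ (-σ)
    - h 0 * h (ε * b) * (|Y| ^ (-σ) - |p| ^ (-σ)) * |b| ^ (-σ)

lemma Psi_symm (h σ ε q p b X Y) : Psi h σ ε q p b X Y = Psi h σ ε q b p Y X := by
  unfold Psi; ring

lemma prod_est {r hu hv hp hb h0 AX AY B P M K C1 C2 L d : ℝ}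
    (hM : 0 ≤ M) (hK : 0 ≤ K) (hL : 0 ≤ L) (hC1 : 0 ≤ C1) (hC2 : 0 ≤ C2) (hd : 0 ≤ d)
    (hB : 0 ≤ B) (hP : 0 ≤ P) (hAX : |AX| ≤ K * B) (hAY : |AY| ≤ K * P)
    (m1 : |hu| ≤ M) (m2 : |hv| ≤ M) (m3 : |hp| ≤ M) (m4 : |hb| ≤ M) (m5 : |h0| ≤ M)
    (er : |r - 1| ≤ C2 * d) (eu : |hu - h0| ≤ L * d) (ev : |hv - hp| ≤ L * d)
    (eb : |hb - h0| ≤ L * d) (eY : |AY - P| ≤ C1 * d * P) :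
    |r * hu * hv * AX * AY - hp * hb * B * P - h0 * hp * (AX - B) * P - h0 * hb * (AY - P) * B| ≤
      (K * (C2 * M * M * K + 2 * L * M * K + M * M * C1) + M * L + M * M * C1) * d * B * P := by
  have e : r * hu * hv * AX * AY - hp * hb * B * P - h0 * hp * (AX - B) * P - h0 * hb * (AY - P) * B
    = AX * ((r - 1) * hu * hv * AY + (hu - h0) * hv * AY + h0 * (hv - hp) * AY + h0 * hp * (AY - P))
      - hp * (hb - h0) * B * P - h0 * hb * (AY - P) * B := by ring
  rw [e]
  have t1 : |(r - 1) * hu * hv * AY| ≤ C2 * d * M * M * (K * P) := by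
    rw [abs_mul, abs_mul, abs_mul]; gcongr
  have t2 : |(hu - h0) * hv * AY| ≤ L * d * M * (K * P) := by
    rw [abs_mul, abs_mul]; gcongr
  have t3 : |h0 * (hv - hp) * AY| ≤ M * (L * d) * (K * P) := by
    rw [abs_mul, abs_mul]; gcongr
  have t4 : |h0 * hp * (AY - P)| ≤ M * M * (C1 * d * P) := by
    rw [abs_mul, abs_mul]; gcongr
  have t5 : |hp * (hb - h0) * B * P| ≤ M * (L * d) * B * P := by
    rw [abs_mul, abs_mul, abs_mul, abs_of_nonneg hB, abs_of_nonneg hP]; gcongr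
  have t6 : |h0 * hb * (AY - P) * B| ≤ M * M * (C1 * d * P) * B := by
    rw [abs_mul, abs_mul, abs_mul, abs_of_nonneg hB]; gcongr
  have s : |(r - 1) * hu * hv * AY + (hu - h0) * hv * AY + h0 * (hv - hp) * AY + h0 * hp * (AY - P)|
      ≤ C2 * d * M * M * (K * P) + L * d * M * (K * P) + M * (L * d) * (K * P) + M * M * (C1 * d * P) := by
    refine (abs_add_le _ _).trans (add_le_add ((abs_add_le _ _).trans (add_le_add
      ((abs_add_le _ _).trans (add_le_add t1 t2)) t3)) t4)
  have s2 := mul_le_mul hAX s (abs_nonneg _) (by positivity)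
  rw [← abs_mul] at s2
  refine (abs_sub _ _).trans ((add_le_add ((abs_sub _ _).trans (add_le_add s2 t5)) t6).trans (le_of_eq ?_))
  ring

set_option maxHeartbeats 1000000 in
lemma AL_half {h α M L} (H : HF h α M L) (hα : 0 < α) (hα1 : α ≤ 1) {σ : ℝ} (hσ : 0 < σ) :
    ∃ C : ℝ, 0 ≤ C ∧ ∀ ε q p b X Y : ℝ, 0 < ε → ε ≤ 1/4 → |q| ≤ ε ^ 2 → |b| ≤ |p| → 1 ≤ |b| →
      ε * |p| < 1 → |X - b| ≤ ε * |p| → |Y - p| ≤ ε * |b| → 2 ≤ |X| →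
      |Psi h σ ε q p b X Y| ≤ C * (ε * |b|) ^ α * |b| ^ (-σ) * |p| ^ (-σ) := by
  obtain ⟨C1, hC10, hC1⟩ := inv_pow_diff σ
  obtain ⟨C2, hC20, hC2⟩ := pow_lip σ
  have hM := H.M0
  have hL := H.L0
  refine ⟨2 ^ σ * (C2 * M * M * 2 ^ σ + 2 * (4 * L) * M * 2 ^ σ + M * M * C1) + M * (4 * L) + M * M * C1,
    by positivity, fun ε q p b X Y he he4 hq hbp hb hp hX hY hX2 => ?_⟩
  · have hb0 : b ≠ 0 := by intro h; rw [h] at hb; simp at hb; linarith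
    have hp0 : p ≠ 0 := by intro h; rw [h] at hbp; simp at hbp; exact hb0 hbp
    have hbpos : 0 < |b| := by linarith
    have hppos : 0 < |p| := by linarith
    set d := (ε * |b|) ^ α with hd
    have heb1 : ε * |b| ≤ 1 := by nlinarith
    have heb : ε * |b| ≤ d := by
      have := Real.rpow_le_rpow_of_exponent_ge (by positivity : 0 < ε * |b|) heb1 hα1
      rwa [Real.rpow_one] at this
    have hed : ε ≤ d := by nlinarith
    have hd0 : 0 ≤ d := by positivity
    have hq1 : |q| ≤ 1/16 := hq.trans (by nlinarith)
    have hq2 := abs_le.1 hq1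
    have hqp : 0 < 1 - q := by linarith
    have hpw : ∀ x : ℝ, |x| ≤ 4 * (ε * |b|) → |x| ^ α ≤ 4 * d := by
      intro x hx
      calc |x| ^ α ≤ (4 * (ε * |b|)) ^ α := Real.rpow_le_rpow (abs_nonneg _) hx hα.le
        _ = 4 ^ α * d := by rw [Real.mul_rpow (by norm_num) (by positivity)]
        _ ≤ 4 * d := by
          gcongr
          calc (4:ℝ) ^ α ≤ 4 ^ (1:ℝ) := Real.rpow_le_rpow_of_exponent_le (by norm_num) hα1
            _ = 4 := Real.rpow_one _
    have hXb : |X| ≤ |b| + 1 := by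
      have := abs_sub_abs_le_abs_sub X b; linarith
    have hbX : |b| ≤ |X| + 1 := by
      have := abs_sub_abs_le_abs_sub b X; rw [abs_sub_comm] at this; linarith
    have hYp : |Y| ≤ 2 * |p| := by
      have := abs_sub_abs_le_abs_sub Y p; nlinarith
    have hpY : |p| ≤ 2 * |Y| := by
      have := abs_sub_abs_le_abs_sub p Y; rw [abs_sub_comm] at this; nlinarith
    have half : ∀ x y : ℝ, 0 < |y| → |y| ≤ 2 * |x| → |(|x| ^ (-σ))| ≤ 2 ^ σ * |y| ^ (-σ) := by
      intro x y hy hxy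
      rw [abs_of_nonneg (by positivity)]
      calc |x| ^ (-σ) ≤ (|y| / 2) ^ (-σ) :=
            Real.rpow_le_rpow_of_nonpos (by positivity) (by linarith) (by linarith)
        _ = 2 ^ σ * |y| ^ (-σ) := by
            rw [Real.div_rpow hy.le (by norm_num), Real.rpow_neg (by norm_num : (0:ℝ) ≤ 2)]
            field_simp
    have hu : |h (ε * X / (1 - q)) - h 0| ≤ (4 * L) * d := by
      refine (H.hol _ _).trans ?_
      rw [mul_comm 4 L, mul_assoc]
      apply mul_le_mul_of_nonneg_left _ hL
      apply hpw
      rw [sub_zero, abs_div, abs_mul, abs_of_pos he, abs_of_pos hqp, div_le_iff₀ hqp]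
      nlinarith [mul_pos he hbpos]
    have hv : |h (ε * Y / (1 - q)) - h (ε * p)| ≤ (4 * L) * d := by
      refine (H.hol _ _).trans ?_
      rw [mul_comm 4 L, mul_assoc]
      apply mul_le_mul_of_nonneg_left _ hL
      apply hpw
      rw [show ε * Y / (1 - q) - ε * p = ε * ((Y - p) + q * p) / (1 - q) by field_simp; ring]
      rw [abs_div, abs_mul, abs_of_pos he, abs_of_pos hqp, div_le_iff₀ hqp]
      have h1 : |(Y - p) + q * p| ≤ ε * |b| + ε ^ 2 * |p| := by
        refine (abs_add_le _ _).trans (add_le_add hY ?_)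
        rw [abs_mul]; gcongr
      have h2 : ε ^ 2 * |p| ≤ ε * |b| := by nlinarith
      have h3 : ε * |b| ≤ |b| := by nlinarith
      have h4 : |(Y - p) + q * p| ≤ 2 * |b| := by linarith
      nlinarith [mul_pos he hbpos]
    have hbb : |h (ε * b) - h 0| ≤ (4 * L) * d := by
      refine (H.hol _ _).trans ?_
      rw [mul_comm 4 L, mul_assoc]
      apply mul_le_mul_of_nonneg_left _ hL
      apply hpw
      rw [sub_zero, abs_mul, abs_of_pos he]
      linarith [mul_pos he hbpos]
    have hr : |(1 - q) ^ σ - 1| ≤ C2 * d := by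
      refine (hC2 (1 - q) ⟨by linarith, by linarith⟩).trans ?_
      apply mul_le_mul_of_nonneg_left _ hC20
      rw [show 1 - q - 1 = -q by ring, abs_neg]
      have : ε ^ 2 ≤ ε := by nlinarith
      linarith
    have hYP : |(|Y| ^ (-σ)) - |p| ^ (-σ)| ≤ C1 * d * |p| ^ (-σ) := by
      refine (hC1 Y p hp0 hYp hpY).trans ?_
      gcongr
      rw [div_le_iff₀ hppos]
      have : d * 1 ≤ d * |p| := mul_le_mul_of_nonneg_left (by linarith) hd0
      linarith
    have := prod_est (K := 2 ^ σ) hM (by positivity) (by positivity : 0 ≤ 4 * L) hC10 hC20 hd0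
      (by positivity : 0 ≤ |b| ^ (-σ)) (by positivity : 0 ≤ |p| ^ (-σ))
      (half X b hbpos (by linarith)) (half Y p hppos hpY) (H.bd (ε * X / (1 - q)))
      (H.bd (ε * Y / (1 - q))) (H.bd (ε * p)) (H.bd (ε * b)) (H.bd 0) hr hu hv hbb hYP
    exact this

lemma AL {h α M L} (H : HF h α M L) (hα : 0 < α) (hα1 : α ≤ 1) {σ β : ℝ} (hσ : 0 < σ)
    (hβ : 0 < β) (hβα : β ≤ α) :
    ∃ C : ℝ, 0 ≤ C ∧ ∀ ε q p b X Y : ℝ, 0 < ε → ε ≤ 1/4 → |q| ≤ ε ^ 2 → 1 ≤ |b| → 1 ≤ |p| →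
      ε * |p| < 1 → ε * |b| < 1 → |X - b| ≤ ε * |p| → |Y - p| ≤ ε * |b| → 2 ≤ |X| → 2 ≤ |Y| →
      |Psi h σ ε q p b X Y| ≤ C * (ε ^ 2 * |b * p|) ^ (β/2) * |b * p| ^ (-σ) := by
  obtain ⟨C, hC0, hC⟩ := AL_half H hα hα1 hσ
  refine ⟨C, hC0, fun ε q p b X Y he he4 hq hb hp hp1 hb1 hX hY hX2 hY2 => ?_⟩
  have gen : ∀ b p : ℝ, 1 ≤ |b| → |b| ≤ |p| → ε * |p| < 1 →
      C * (ε * |b|) ^ α * |b| ^ (-σ) * |p| ^ (-σ) ≤ C * (ε ^ 2 * |b * p|) ^ (β/2) * |b * p| ^ (-σ) := by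
    intro b p hb hbp hp1
    have hb0 : 0 < |b| := by linarith
    rw [abs_mul, Real.mul_rpow (abs_nonneg b) (abs_nonneg p), mul_assoc]
    gcongr
    calc (ε * |b|) ^ α ≤ (ε * |b|) ^ β :=
          Real.rpow_le_rpow_of_exponent_ge (by positivity) (by nlinarith) hβα
      _ = ((ε * |b|) ^ 2) ^ (β / 2) := by
          rw [← Real.rpow_natCast, ← Real.rpow_mul (by positivity)]; congr 1; push_cast; ring
      _ ≤ _ := by
          apply Real.rpow_le_rpow (by positivity) _ (by positivity)
          rw [mul_pow, sq |b|]; gcongr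
  rcases le_total |b| |p| with hle | hle
  · exact (hC ε q p b X Y he he4 hq hle hb hp1 hX hY hX2).trans (gen b p hb hle hp1)
  · rw [Psi_symm, mul_comm b p]
    exact (hC ε q b p Y X he he4 hq hle hp hb1 hY hX hY2).trans (gen p b hp hle hb1)

end PartD

section PartE
lemma Prof.smul {U u} (H : Prof U u) {C : ℝ} (hC : 0 ≤ C) :
    Prof (fun t => C * U t) (fun j => C * u j) where
  nonneg t := mul_nonneg hC (H.nonneg t)
  zero t ht := by rw [H.zero t ht, mul_zero]
  le j t h1 h2 := mul_le_mul_of_nonneg_left (H.le j t h1 h2) hC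
  unn j := mul_nonneg hC (H.unn j)
  summ := H.summ.mul_left C

lemma lattice_sum' {U u} (H : Prof U u) {τ C : ℝ} (hτ : 1 < τ) (hC : 0 ≤ C) {F : ℤ × ℤ → ℝ} (h0 : F 0 = 0)
    (hF : ∀ l, l ≠ 0 → |F l| ≤ C * (U |la l| * |la l * lb l| ^ (-τ))) :
    Summable F ∧ ∑' l, |F l| ≤ C * (2 * (∑' i, nrm i ^ (-τ)) * ∑' j, u j) := by
  have := lattice_sum (H.smul hC) hτ h0 (fun l hl => (hF l hl).trans (le_of_eq (by ring)))
  refine ⟨this.1, this.2.trans (le_of_eq ?_)⟩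
  rw [tsum_mul_left]; ring

lemma lR_zero : lR 0 = 0 := by simp [lR]
lemma lR_ne {l : ℤ × ℤ} (h : l ≠ 0) : lR l ≠ 0 := by
  intro h1; apply h; rw [← lR_zero] at h1; exact lR.injective h1

lemma lattice_sum_b {U u} (H : Prof U u) {τ C : ℝ} (hτ : 1 < τ) (hC : 0 ≤ C) {F : ℤ × ℤ → ℝ} (h0 : F 0 = 0)
    (hF : ∀ l, l ≠ 0 → |F l| ≤ C * (U |lb l| * |la l * lb l| ^ (-τ))) :
    Summable F ∧ ∑' l, |F l| ≤ C * (2 * (∑' i, nrm i ^ (-τ)) * ∑' j, u j) := by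
  have := lattice_sum' H hτ hC (F := fun l => F (lR l)) (by rw [lR_zero, h0]) (fun l hl => by
    have := hF _ (lR_ne hl)
    rw [la_lR, lb_lR, abs_neg, neg_mul_neg, mul_comm (lb l) (la l)] at this
    exact this)
  refine ⟨(Equiv.summable_iff lR).1 this.1, ?_⟩
  rw [← Equiv.tsum_eq lR]; exact this.2

lemma lT_zero (k : ℤ) : (lT ^ k) 0 = 0 := by
  apply lab_inj
  · rw [la_lTk, la_zero, mul_zero]
  · rw [lb_lTk, lb_zero, mul_zero]

section
variable (h : ℝ → ℝ) (σ : ℝ)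

noncomputable def fPhi (n : ℕ) (l : ℤ × ℤ) : ℝ :=
  (φ ^ n) ^ σ * ((1 - (ψ / φ) ^ n) ^ σ * h (φ⁻¹ ^ n * (la l + lb l) / (1 - (ψ / φ) ^ n)) *
    h (φ⁻¹ ^ n * (φ ^ n * la l + ψ ^ n * lb l) / (1 - (ψ / φ) ^ n)) * |la l + lb l| ^ (-σ) *
    |φ ^ n * la l + ψ ^ n * lb l| ^ (-σ))

noncomputable def fV (n : ℕ) (l : ℤ × ℤ) : ℝ := h (la l) * h (ψ ^ n * lb l) * |la l * lb l| ^ (-σ)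

noncomputable def fE (l : ℤ × ℤ) : ℝ :=
  h 0 * h (la l) * (|la l + lb l| ^ (-σ) - |lb l| ^ (-σ)) * |la l| ^ (-σ)

end

lemma sqrt5_gt : 2 < √5 := by rw [Real.lt_sqrt (by norm_num)]; norm_num

lemma abs_X_ge {l : ℤ × ℤ} (hl : l ≠ 0) (ha : |la l| < 1) : 2 ≤ |la l + lb l| := by
  have h1 : l.1 ≠ 0 := by
    intro h1
    have : la l = l.2 := by simp [la, h1]
    rw [this] at ha
    have h2 : |l.2| < 1 := by exact_mod_cast ha
    have h3 : l.2 = 0 := Int.abs_lt_one_iff.1 h2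
    apply hl; ext <;> assumption
  have h2 : (1:ℝ) ≤ |(l.1 : ℝ)| := by exact_mod_cast Int.one_le_abs h1
  rw [la_add_lb, abs_mul, abs_of_pos (by positivity)]
  nlinarith [sqrt5_gt]

lemma fE_zero_of {h α M L} (H : HF h α M L) (σ) {l : ℤ × ℤ} (hl : 1 ≤ |la l|) : fE h σ l = 0 := by
  rw [fE, H.supp (la l) (by linarith)]; ring

lemma fE_bound {h α M L} (H : HF h α M L) {σ : ℝ} (hσ : 0 < σ) :
    ∃ C : ℝ, 0 ≤ C ∧ ∀ l : ℤ × ℤ, l ≠ 0 → |la l| < 1 →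
      |fE h σ l| ≤ C * (|la l| ^ (2:ℝ) * |la l * lb l| ^ (-(σ + 1))) := by
  obtain ⟨C, hC0, hC⟩ := inv_pow_diff σ
  have hM := H.M0
  refine ⟨M * M * C, by positivity, fun l hl ha => ?_⟩
  have hX := abs_X_ge hl ha
  have hap : 0 < |la l| := abs_pos.2 (la_ne hl)
  have hbp : 0 < |lb l| := abs_pos.2 (lb_ne hl)
  have hab := lab_ge hl
  rw [abs_mul] at hab
  have hb1 : 1 ≤ |lb l| := by nlinarith
  have h1 : |la l + lb l| ≤ |la l| + |lb l| := abs_add_le _ _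
  have h2 : |lb l| ≤ |la l + lb l| + |la l| := by
    have := abs_sub (la l + lb l) (la l); simpa using this
  have h3 := hC (la l + lb l) (lb l) (lb_ne hl) (by linarith) (by linarith)
  rw [add_sub_cancel_right] at h3
  rw [fE, abs_mul, abs_mul, abs_mul, abs_of_nonneg (by positivity : 0 ≤ |la l| ^ (-σ))]
  calc |h 0| * |h (la l)| * |(|la l + lb l| ^ (-σ)) - |lb l| ^ (-σ)| * |la l| ^ (-σ)
      ≤ M * M * (C * (|la l| / |lb l|) * |lb l| ^ (-σ)) * |la l| ^ (-σ) := by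
        gcongr
        · exact H.bd _
        · exact H.bd _
    _ = _ := by
        rw [abs_mul, Real.mul_rpow hap.le hbp.le, neg_add, Real.rpow_add hap, Real.rpow_add hbp,
          Real.rpow_neg_one, Real.rpow_neg_one, Real.rpow_ofNat]
        field_simp

lemma fE_zero (h : ℝ → ℝ) {σ : ℝ} (hσ : 0 < σ) : fE h σ 0 = 0 := by
  rw [fE, la_zero, abs_zero, Real.zero_rpow (by linarith), mul_zero]

lemma fE_summable {h α M L} (H : HF h α M L) {σ : ℝ} (hσ : 0 < σ) : Summable (fE h σ) := by
  obtain ⟨C, hC0, hC⟩ := fE_bound H hσ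
  refine (lattice_sum' (prof_pow (s := 2) (by norm_num)) (τ := σ + 1) (by linarith) hC0
    (fE_zero h hσ) (fun l hl => ?_)).1
  by_cases ha : |la l| < 1
  · rw [if_pos ⟨abs_nonneg _, ha⟩]; exact hC l hl ha
  · rw [fE_zero_of H σ (not_lt.1 ha), abs_zero, if_neg (by intro h; exact ha h.2)]; simp

def inR (n : ℕ) (l : ℤ × ℤ) : Prop := |la l| < 1 ∧ |lb l| < φ ^ n

open Classical in
lemma fE_tail {h α M L} (H : HF h α M L) {σ : ℝ} (hσ : 1 < σ) :
    ∃ C : ℝ, 0 ≤ C ∧ ∀ n : ℕ, Summable (fun l => if inR n l then 0 else fE h σ l) ∧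
      ∑' l, |if inR n l then 0 else fE h σ l| ≤ C * (φ⁻¹ ^ n) ^ (1/2:ℝ) := by
  obtain ⟨C, hC0, hC⟩ := fE_bound H (by linarith : 0 < σ)
  have hp := inv_pos.2 goldenRatio_pos
  have key := fun n : ℕ => lattice_sum' (prof_pow (s := 3/2) (by norm_num)) (τ := σ + 1/2) (by linarith)
    (C := C * (φ⁻¹ ^ n) ^ (1/2:ℝ)) (by positivity)
    (F := fun l => if inR n l then 0 else fE h σ l) (by
      rw [fE_zero h (by linarith)]; simp) (fun l hl => by
    by_cases ha : |la l| < 1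
    · have hU : (if 0 ≤ |la l| ∧ |la l| < 1 then |la l| ^ (3/2:ℝ) else 0) = |la l| ^ (3/2:ℝ) :=
        if_pos ⟨abs_nonneg _, ha⟩
      rw [hU]
      have hap : 0 < |la l| := abs_pos.2 (la_ne hl)
      have hbp : 0 < |lb l| := abs_pos.2 (lb_ne hl)
      by_cases hr : inR n l
      · rw [if_pos hr, abs_zero]; positivity
      · rw [if_neg hr]
        have hb : φ ^ n ≤ |lb l| := by
          by_contra hc; exact hr ⟨ha, not_le.1 hc⟩
        refine (hC l hl ha).trans ?_
        rw [mul_assoc]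
        apply mul_le_mul_of_nonneg_left _ hC0
        have e1 : |la l| ^ (2:ℝ) = |la l| ^ (3/2:ℝ) * |la l| ^ (1/2:ℝ) := by
          rw [← Real.rpow_add hap]; norm_num
        have e2 : |la l * lb l| ^ (-(σ + 1)) =
            |la l * lb l| ^ (-(σ + 1/2)) * (|la l| ^ (-(1/2:ℝ)) * |lb l| ^ (-(1/2:ℝ))) := by
          rw [← Real.mul_rpow hap.le hbp.le, ← abs_mul, ← Real.rpow_add (by rw [abs_mul]; positivity)]
          congr 1; ring
        have e3 : |la l| ^ (1/2:ℝ) * |la l| ^ (-(1/2:ℝ)) = 1 := by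
          rw [← Real.rpow_add hap]; norm_num
        have e4 : |lb l| ^ (-(1/2:ℝ)) ≤ (φ⁻¹ ^ n) ^ (1/2:ℝ) := by
          rw [inv_pow, Real.inv_rpow (by positivity), ← Real.rpow_neg (by positivity)]
          exact Real.rpow_le_rpow_of_nonpos (by positivity) hb (by norm_num)
        rw [e1, e2]
        calc _ = (|la l| ^ (1/2:ℝ) * |la l| ^ (-(1/2:ℝ))) * |lb l| ^ (-(1/2:ℝ)) *
            (|la l| ^ (3/2:ℝ) * |la l * lb l| ^ (-(σ + 1/2))) := by ring
          _ ≤ _ := by rw [e3, one_mul]; gcongr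
    · have hU : (if 0 ≤ |la l| ∧ |la l| < 1 then |la l| ^ (3/2:ℝ) else 0) = 0 :=
        if_neg (by intro h; exact ha h.2)
      rw [fE_zero_of H σ (not_lt.1 ha), hU]; simp)
  refine ⟨C * (2 * (∑' i, nrm i ^ (-(σ + 1/2))) * ∑' j : ℕ, (φ⁻¹ ^ (3/2:ℝ)) ^ j), ?_, fun n => ⟨(key n).1, ?_⟩⟩
  · have : 0 ≤ ∑' i, nrm i ^ (-(σ + 1/2)) := tsum_nonneg fun i => by have := nrm_pos i; positivity
    have : 0 ≤ ∑' j : ℕ, (φ⁻¹ ^ (3/2:ℝ)) ^ j := tsum_nonneg fun i => by positivity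
    positivity
  · refine (key n).2.trans (le_of_eq ?_); ring

end PartE

section PartE2
lemma abs_psi_pow (n : ℕ) : |ψ ^ n| = φ⁻¹ ^ n := by
  have := abs_conj_zpow n
  rw [zpow_natCast] at this
  rw [this, zpow_neg, zpow_natCast, inv_pow]

lemma q_abs (n : ℕ) : |(ψ / φ) ^ n| = (φ⁻¹ ^ n) ^ 2 := by
  rw [div_pow, abs_div, abs_psi_pow, abs_of_pos (pow_pos goldenRatio_pos n), inv_pow, div_eq_mul_inv]
  ring

lemma h_psi {h α M L} (H : HF h α M L) (n : ℕ) (x : ℝ) : h (ψ ^ n * x) = h (φ⁻¹ ^ n * x) := by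
  have h1 : |ψ ^ n| = |φ⁻¹ ^ n| := by
    rw [abs_psi_pow, abs_of_pos (pow_pos (inv_pos.2 goldenRatio_pos) n)]
  rcases abs_eq_abs.1 h1 with h2 | h2
  · rw [h2]
  · rw [h2, neg_mul, H.even]

noncomputable def sw (n : ℕ) : Equiv.Perm (ℤ × ℤ) := lR * lT ^ (n : ℤ)

lemma la_sw (n l) : la (sw n l) = -(ψ ^ n * lb l) := by
  rw [sw, Equiv.Perm.mul_apply, la_lR, lb_lTk, zpow_natCast]
lemma lb_sw (n l) : lb (sw n l) = -(φ ^ n * la l) := by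
  rw [sw, Equiv.Perm.mul_apply, lb_lR, la_lTk, zpow_natCast]

lemma sw_zero (n) : sw n 0 = 0 := by
  rw [sw, Equiv.Perm.mul_apply, lT_zero, lR_zero]

lemma sw_ne {n} {l : ℤ × ℤ} (h : l ≠ 0) : sw n l ≠ 0 := by
  intro h1; apply h; rw [← sw_zero n] at h1; exact (sw n).injective h1

lemma inR_sw (n l) : inR n (sw n l) ↔ inR n l := by
  have gp := pow_pos goldenRatio_pos n
  rw [inR, inR, la_sw, lb_sw, abs_neg, abs_neg, abs_mul, abs_mul, abs_psi_pow, abs_of_pos gp,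
    inv_pow, inv_mul_lt_iff₀ gp, mul_one, mul_lt_iff_lt_one_right gp]
  exact and_comm

lemma Psi_eq {h α M L} (H : HF h α M L) (σ : ℝ) (n : ℕ) {l : ℤ × ℤ} (hl : l ≠ 0) :
    (φ ^ n) ^ σ * Psi h σ (φ⁻¹ ^ n) ((ψ / φ) ^ n) (φ ^ n * la l) (lb l) (la l + lb l)
      (φ ^ n * la l + ψ ^ n * lb l) = fPhi h σ n l - fV h σ n l - fE h σ l - fE h σ (sw n l) := by
  have gp := pow_pos goldenRatio_pos n
  have hap : 0 < |la l| := abs_pos.2 (la_ne hl)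
  have hbp : 0 < |lb l| := abs_pos.2 (lb_ne hl)
  have e1 : φ⁻¹ ^ n * (φ ^ n * la l) = la l := by rw [inv_pow]; field_simp
  have e2 : |φ ^ n * la l| ^ (-σ) = ((φ ^ n) ^ σ)⁻¹ * |la l| ^ (-σ) := by
    rw [abs_mul, abs_of_pos gp, Real.mul_rpow gp.le hap.le, Real.rpow_neg gp.le]
  have e3 : |ψ ^ n * lb l| ^ (-σ) = (φ ^ n) ^ σ * |lb l| ^ (-σ) := by
    rw [abs_mul, abs_psi_pow, Real.mul_rpow (by positivity) hbp.le, inv_pow, Real.inv_rpow gp.le,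
      Real.rpow_neg gp.le, inv_inv]
  have gps : 0 < (φ ^ n) ^ σ := Real.rpow_pos_of_pos gp _
  unfold Psi fPhi fV fE
  rw [la_sw, lb_sw, H.even, ← neg_add, abs_neg, abs_neg, abs_neg, h_psi H, e3, e1, e2,
    add_comm (ψ ^ n * lb l), abs_mul (la l) (lb l), Real.mul_rpow hap.le hbp.le]
  field_simp

lemma phi_inv_lt : φ⁻¹ ≤ 5/8 := by
  rw [inv_goldenRatio, goldenConj]; 
  have : √5 ≤ 9/4 := by rw [Real.sqrt_le_left (by norm_num)]; norm_num
  linarith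

lemma eps_le {n : ℕ} (hn : 3 ≤ n) : φ⁻¹ ^ n ≤ 1/4 := by
  have hp := inv_pos.2 goldenRatio_pos
  have h1 := phi_inv_lt
  calc φ⁻¹ ^ n ≤ φ⁻¹ ^ 3 := pow_le_pow_of_le_one hp.le (by linarith) hn
    _ ≤ (5/8) ^ 3 := by gcongr
    _ ≤ 1/4 := by norm_num

lemma q_bd {n : ℕ} (hn : 3 ≤ n) : |(ψ / φ) ^ n| ≤ 1/16 := by
  have hp := pow_pos (inv_pos.2 goldenRatio_pos) n
  rw [q_abs]; nlinarith [eps_le hn]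

/-- outside the box the summands vanish -/
lemma fPhi_out {h α M L} (H : HF h α M L) (σ : ℝ) {n : ℕ} (hn : 3 ≤ n) {l : ℤ × ℤ} (hl : ¬ inR n l) :
    fPhi h σ n l = 0 := by
  by_contra hc
  apply hl
  have gp := pow_pos goldenRatio_pos n
  have hp := pow_pos (inv_pos.2 goldenRatio_pos) n
  have he := eps_le hn
  have hq := q_bd hn
  have hq' := abs_le.1 hq
  have h1q : 0 < 1 - (ψ / φ) ^ n := by linarith [hq'.2]
  have key : ∀ z, h (z / (1 - (ψ / φ) ^ n)) ≠ 0 → |z| < 17/24 := by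
    intro z hz
    by_contra hz2
    apply hz
    apply H.supp
    rw [abs_div, abs_of_pos h1q, le_div_iff₀ h1q]
    linarith [hq'.1]
  have k1 := key (φ⁻¹ ^ n * (la l + lb l)) (by
    intro h0; apply hc; rw [fPhi, h0]; ring)
  have k2 := key (φ⁻¹ ^ n * (φ ^ n * la l + ψ ^ n * lb l)) (by
    intro h0; apply hc; rw [fPhi, h0]; ring)
  have e1 : φ⁻¹ ^ n * (φ ^ n * la l + ψ ^ n * lb l) = la l + ψ ^ n * (φ⁻¹ ^ n * lb l) := by
    rw [inv_pow]; field_simp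
  rw [e1] at k2
  rw [mul_add] at k1
  set e := φ⁻¹ ^ n
  have b1 : |e * lb l| ≤ |e * la l + e * lb l| + |e * la l| := by
    have := abs_sub (e * la l + e * lb l) (e * la l); simpa using this
  have b2 : |la l| ≤ |la l + ψ ^ n * (e * lb l)| + |ψ ^ n * (e * lb l)| := by
    have := abs_sub (la l + ψ ^ n * (e * lb l)) (ψ ^ n * (e * lb l)); simpa using this
  rw [abs_mul (ψ ^ n), abs_psi_pow] at b2
  rw [abs_mul e (la l), abs_of_pos hp] at b1
  have c1 : e * |la l| ≤ 1/4 * |la l| := by gcongr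
  have c2 : e * |e * lb l| ≤ 1/4 * |e * lb l| := by gcongr
  have d1 : |la l| < 1 := by change _ ≤ _ + e * |e * lb l| at b2; linarith
  have d2 : |e * lb l| < 1 := by change _ ≤ _ + e * |e * lb l| at b2; linarith
  refine ⟨d1, ?_⟩
  rw [abs_mul, abs_of_pos hp] at d2
  rwa [show e = (φ ^ n)⁻¹ from inv_pow _ _, inv_mul_lt_iff₀ gp, mul_one] at d2

lemma fV_out {h α M L} (H : HF h α M L) (σ : ℝ) {n : ℕ} {l : ℤ × ℤ} (hl : ¬ inR n l) :
    fV h σ n l = 0 := by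
  by_contra hc
  apply hl
  have gp := pow_pos goldenRatio_pos n
  constructor
  · by_contra h1; apply hc; rw [fV, H.supp (la l) (by linarith)]; ring
  · by_contra h1; apply hc; rw [fV, H.supp (ψ ^ n * lb l)]; · ring
    rw [abs_mul, abs_psi_pow, inv_pow, ← div_eq_inv_mul, le_div_iff₀ gp]
    linarith

lemma inR_a {n : ℕ} {l : ℤ × ℤ} (hl : l ≠ 0) (h : inR n l) : φ⁻¹ ^ n < |la l| ∧ |la l| < 1 := by
  refine ⟨?_, h.1⟩
  have gp := pow_pos goldenRatio_pos n
  have := lab_ge hl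
  rw [abs_mul] at this
  have hap : 0 < |la l| := abs_pos.2 (la_ne hl)
  rw [inv_pow, inv_lt_iff_one_lt_mul₀' gp]
  nlinarith [h.2]

lemma fV_zero (h : ℝ → ℝ) {σ : ℝ} (hσ : 0 < σ) (n) : fV h σ n 0 = 0 := by
  rw [fV, la_zero, zero_mul, abs_zero, Real.zero_rpow (by linarith), mul_zero]

lemma fPhi_zero (h : ℝ → ℝ) {σ : ℝ} (hσ : 0 < σ) (n) : fPhi h σ n 0 = 0 := by
  rw [fPhi, la_zero, lb_zero, add_zero, abs_zero, Real.zero_rpow (by linarith)]; ring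

lemma fV_summable {h α M L} (H : HF h α M L) {σ : ℝ} (hσ : 1 < σ) (n : ℕ) : Summable (fV h σ n) := by
  have hM := H.M0
  refine (lattice_sum' (prof_cut n) hσ (C := M * M) (by positivity) (fV_zero h (by linarith) n)
    (fun l hl => ?_)).1
  by_cases hr : inR n l
  · rw [if_pos (inR_a hl hr), one_mul, fV, abs_mul, abs_mul,
      abs_of_nonneg (a := |la l * lb l| ^ (-σ)) (by positivity)]
    gcongr
    · exact H.bd _
    · exact H.bd _
  · rw [fV_out H σ hr, abs_zero]
    split_ifs <;> positivity

set_option maxHeartbeats 2000000 in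
/-- main comparison -/
lemma fPhi_sum {h α M L} (H : HF h α M L) (hα : 0 < α) (hα1 : α ≤ 1) {σ : ℝ} (hσ : 1 < σ) {β : ℝ}
    (hβ : 0 < β) (hβα : β ≤ α) (hβσ : β ≤ σ - 1) :
    ∃ C : ℝ, 0 ≤ C ∧ ∀ n : ℕ, 3 ≤ n →
      |∑' l, fPhi h σ n l - ∑' l, fV h σ n l - 2 * ∑' l, fE h σ l| ≤
        C * ((n + 1) * (φ⁻¹ ^ n) ^ (β / 2)) := by
  classical
  obtain ⟨C1, hC10, hC1⟩ := AL H hα hα1 (σ := σ) (by linarith) hβ hβα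
  obtain ⟨C2, hC20, hC2⟩ := fE_tail H hσ
  set Z := 2 * (∑' i, nrm i ^ (-(σ - β/2)))
  have hZ : 0 ≤ Z := mul_nonneg zero_le_two (tsum_nonneg fun i => by have := nrm_pos i; positivity)
  refine ⟨C1 * Z + 2 * C2, by positivity, fun n hn => ?_⟩
  have gp := pow_pos goldenRatio_pos n
  have hp := pow_pos (inv_pos.2 goldenRatio_pos) n
  have he := eps_le hn
  let Er : ℤ × ℤ → ℝ := fun l => fPhi h σ n l - fV h σ n l - fE h σ l - fE h σ (sw n l)
  let G1 : ℤ × ℤ → ℝ := fun l => if inR n l then Er l else 0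
  let G2 : ℤ × ℤ → ℝ := fun l => if inR n l then 0 else fE h σ l
  have hEr : ∀ l, Er l = G1 l - G2 l - G2 (sw n l) := by
    intro l
    simp only [G1, G2, inR_sw]
    by_cases hr : inR n l
    · simp [hr]
    · simp [hr, Er, fPhi_out H σ hn hr, fV_out H σ hr]
  have hG1 := lattice_sum' (prof_cut n) (τ := σ - β/2) (by linarith) (C := C1 * (φ⁻¹ ^ n) ^ (β/2))
    (by positivity) (F := G1) (by
      simp only [G1, Er, fPhi_zero h (show 0 < σ by linarith), fV_zero h (show 0 < σ by linarith),
        fE_zero h (show 0 < σ by linarith), sw_zero]; simp) (fun l hl => by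
    by_cases hr : inR n l
    · have hra := inR_a hl hr
      have hU : (if φ⁻¹ ^ n < |la l| ∧ |la l| < 1 then (1:ℝ) else 0) = 1 := if_pos hra
      have hG : G1 l = Er l := if_pos hr
      rw [hU, one_mul, hG]
      have hap : 0 < |la l| := abs_pos.2 (la_ne hl)
      have hbp : 0 < |lb l| := abs_pos.2 (lb_ne hl)
      have hab := lab_ge hl
      rw [abs_mul] at hab
      have hrs := (inR_sw n l).2 hr
      have hX := abs_X_ge hl hr.1
      have hY := abs_X_ge (sw_ne hl) hrs.1
      rw [la_sw, lb_sw, ← neg_add, abs_neg, add_comm] at hY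
      have hP : |φ ^ n * la l| = φ ^ n * |la l| := by rw [abs_mul, abs_of_pos gp]
      have eP : φ⁻¹ ^ n * (φ ^ n * |la l|) = |la l| := by rw [inv_pow]; field_simp
      have AB := hC1 (φ⁻¹ ^ n) ((ψ / φ) ^ n) (φ ^ n * la l) (lb l) (la l + lb l)
        (φ ^ n * la l + ψ ^ n * lb l) hp he (q_abs n).le (by nlinarith [hr.1]) (by
          rw [hP]; nlinarith [hr.2]) (by rw [hP, eP]; exact hr.1) (by
          rw [inv_pow, inv_mul_lt_iff₀ gp, mul_one]; exact hr.2) (by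
          rw [hP, eP, add_sub_cancel_right]) (by
          rw [add_sub_cancel_left, abs_mul, abs_psi_pow]) hX hY
      have hE : Er l = _ := (Psi_eq H σ n hl).symm
      have gps : 0 < (φ ^ n) ^ σ := Real.rpow_pos_of_pos gp _
      have habp : 0 < |la l * lb l| := by rw [abs_mul]; positivity
      rw [hE, abs_mul, abs_of_pos gps]
      refine (mul_le_mul_of_nonneg_left AB gps.le).trans (le_of_eq ?_)
      have e1 : |lb l * (φ ^ n * la l)| = φ ^ n * |la l * lb l| := by
        rw [abs_mul, hP, abs_mul]; ring
      have e2 : (φ⁻¹ ^ n) ^ 2 * (φ ^ n * |la l * lb l|) = φ⁻¹ ^ n * |la l * lb l| := by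
        rw [inv_pow]; field_simp
      rw [e1, e2, Real.mul_rpow hp.le habp.le, Real.mul_rpow gp.le habp.le, Real.rpow_neg gp.le,
        show -(σ - β/2) = β/2 + -σ by ring, Real.rpow_add habp]
      field_simp
    · have hG : G1 l = 0 := if_neg hr
      rw [hG, abs_zero]
      split_ifs <;> positivity)
  rw [cut_tsum] at hG1
  obtain ⟨hG2s, hG2⟩ := hC2 n
  change Summable G2 at hG2s
  change ∑' l, |G2 l| ≤ _ at hG2
  have hG3s : Summable (fun l => G2 (sw n l)) := (Equiv.summable_iff (sw n)).2 hG2s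
  have hG3 : ∑' l, |G2 (sw n l)| = ∑' l, |G2 l| := Equiv.tsum_eq (sw n) (fun l => |G2 l|)
  have hEs : Summable Er := by
    rw [show Er = fun l => G1 l - G2 l - G2 (sw n l) from funext hEr]
    exact (hG1.1.sub hG2s).sub hG3s
  have hEb : |∑' l, Er l| ≤ ∑' l, |G1 l| + ∑' l, |G2 l| + ∑' l, |G2 l| := by
    have e : ∑' l, Er l = ∑' l, G1 l - ∑' l, G2 l - ∑' l, G2 (sw n l) := by
      rw [← hG1.1.tsum_sub hG2s, ← (hG1.1.sub hG2s).tsum_sub hG3s]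
      exact tsum_congr hEr
    have n1 : ∀ {F : ℤ × ℤ → ℝ}, Summable F → |∑' l, F l| ≤ ∑' l, |F l| := fun {F} hF => by
      have := norm_tsum_le_tsum_norm (f := F) hF.norm
      simpa only [Real.norm_eq_abs] using this
    rw [e]
    have a1 := n1 hG1.1
    have a2 := n1 hG2s
    have a3 := n1 hG3s
    rw [hG3] at a3
    calc _ ≤ |∑' l, G1 l - ∑' l, G2 l| + |∑' l, G2 (sw n l)| := abs_sub _ _
      _ ≤ |∑' l, G1 l| + |∑' l, G2 l| + |∑' l, G2 (sw n l)| := by gcongr; exact abs_sub _ _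
      _ ≤ _ := by gcongr
  have hVs := fV_summable H hσ n
  have hFs := fE_summable H (show 0 < σ by linarith)
  have hFs' : Summable (fun l => fE h σ (sw n l)) := (Equiv.summable_iff (sw n)).2 hFs
  have hPe : ∑' l, fPhi h σ n l = ∑' l, Er l + ∑' l, fV h σ n l + 2 * ∑' l, fE h σ l := by
    have e3 : ∑' l, fE h σ (sw n l) = ∑' l, fE h σ l := Equiv.tsum_eq (sw n) (fE h σ)
    have e4 : ∑' l, fPhi h σ n l =
        ∑' l, Er l + ∑' l, fV h σ n l + ∑' l, fE h σ l + ∑' l, fE h σ (sw n l) := by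
      rw [← hEs.tsum_add hVs, ← (hEs.add hVs).tsum_add hFs, ← ((hEs.add hVs).add hFs).tsum_add hFs']
      exact tsum_congr fun l => by simp only [Er]; ring
    rw [e4, e3]; ring
  rw [hPe, show ∀ a b c : ℝ, a + b + c - b - c = a by intros; ring]
  refine hEb.trans ?_
  have hhalf : (φ⁻¹ ^ n) ^ (1/2:ℝ) ≤ (φ⁻¹ ^ n) ^ (β/2) :=
    Real.rpow_le_rpow_of_exponent_ge hp (by linarith) (by linarith)
  have hrp : 0 < (φ⁻¹ ^ n) ^ (β/2) := Real.rpow_pos_of_pos hp _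
  have i1 := hG1.2
  have i2 : ∑' l, |G2 l| ≤ C2 * (φ⁻¹ ^ n) ^ (β/2) := hG2.trans (by gcongr)
  have nn : (0:ℝ) ≤ n := by positivity
  change _ ≤ _ * (Z * _) at i1
  have t1 : 0 ≤ C1 * Z * (φ⁻¹ ^ n) ^ (β/2) := by positivity
  have t2 : 0 ≤ C2 * n * (φ⁻¹ ^ n) ^ (β/2) := by positivity
  have t3 : (C1 * Z + 2 * C2) * (((n:ℝ) + 1) * (φ⁻¹ ^ n) ^ (β / 2)) =
      C1 * (φ⁻¹ ^ n) ^ (β / 2) * (Z * n) + C1 * Z * (φ⁻¹ ^ n) ^ (β / 2) +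
      2 * (C2 * n * (φ⁻¹ ^ n) ^ (β / 2)) + 2 * (C2 * (φ⁻¹ ^ n) ^ (β / 2)) := by ring
  rw [t3]
  linarith

end PartE2

section PartE3
open Filter Topology

set_option maxHeartbeats 2000000 in
lemma tele_int {g : ℤ → ℝ} {A : ℝ} (hs : Summable fun k => g k - g (k - 1))
    (h1 : Tendsto (fun n : ℕ => g n) atTop (𝓝 A)) (h2 : Tendsto (fun n : ℕ => g (-n)) atTop (𝓝 0)) :
    ∑' k, (g k - g (k - 1)) = A := by
  have s1 : Summable (fun n : ℕ => g ((n:ℤ)) - g ((n:ℤ) - 1)) :=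
    hs.comp_injective (i := fun n : ℕ => (n:ℤ)) (fun a b h => by simp only at h; omega)
  have s2 : Summable (fun n : ℕ => g (-((n:ℤ)+1)) - g (-((n:ℤ)+1) - 1)) :=
    hs.comp_injective (i := fun n : ℕ => -((n:ℤ)+1)) (fun a b h => by simp only at h; omega)
  have t1 : HasSum (fun n : ℕ => g ((n:ℤ)) - g ((n:ℤ) - 1)) (A - g (-1)) := by
    rw [s1.hasSum_iff_tendsto_nat]
    have e : ∀ n : ℕ, ∑ i ∈ Finset.range n, (g (i:ℤ) - g ((i:ℤ) - 1)) = g ((n:ℤ) - 1) - g (-1) := by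
      intro n
      induction n with
      | zero => simp
      | succ n ih => rw [Finset.sum_range_succ, ih]; push_cast; rw [add_sub_cancel_right]; ring
    simp only [e]
    apply Tendsto.sub_const
    rw [← tendsto_add_atTop_iff_nat 1]
    simpa using h1
  have t2 : HasSum (fun n : ℕ => g (-((n:ℤ)+1)) - g (-((n:ℤ)+1) - 1)) (g (-1) - 0) := by
    rw [s2.hasSum_iff_tendsto_nat]
    have e : ∀ n : ℕ, ∑ i ∈ Finset.range n, (g (-((i:ℤ)+1)) - g (-((i:ℤ)+1) - 1)) =
        g (-1) - g (-((n + 1 : ℕ) : ℤ)) := by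
      intro n
      induction n with
      | zero => simp
      | succ n ih =>
        rw [Finset.sum_range_succ, ih]; push_cast
        rw [show -((n:ℤ)+1) - 1 = -((n:ℤ) + 1 + 1) by ring]; ring
    simp only [e]
    apply Tendsto.const_sub
    exact (tendsto_add_atTop_iff_nat (f := fun n : ℕ => g (-(n:ℤ))) 1).2 h2
  have := (HasSum.of_nat_of_neg_add_one (f := fun k => g k - g (k - 1)) t1 t2).tsum_eq
  rw [this]; ring

lemma geom_lemma {x : ℕ → ℝ} {c K ρ : ℝ} (hρ0 : 0 ≤ ρ) (hρ : ρ < 1)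
    (h : ∀ n, |x (n+1) - x n - c| ≤ K * ρ ^ n) :
    ∃ D K' : ℝ, 0 ≤ K' ∧ ∀ n : ℕ, |x n - c * n - D| ≤ K' * ρ ^ n := by
  let y : ℕ → ℝ := fun n => x n - c * n
  have hK : 0 ≤ K := by have := (abs_nonneg _).trans (h 0); simpa using this
  have hy : ∀ n, dist (y n) (y (n+1)) ≤ K * ρ ^ n := by
    intro n
    rw [dist_comm, Real.dist_eq]
    convert h n using 2
    simp only [y]; push_cast; ring
  obtain ⟨D, hD⟩ := cauchySeq_tendsto_of_complete (cauchySeq_of_le_geometric ρ K hρ hy)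
  refine ⟨D, K / (1 - ρ), by have : 0 < 1 - ρ := by linarith
                             positivity, fun n => ?_⟩
  have := dist_le_of_le_geometric_of_tendsto ρ K hρ hy hD n
  rw [Real.dist_eq] at this
  refine this.trans (le_of_eq ?_)
  ring

end PartE3

section PartE4
open Filter Topology

noncomputable def fJ (h : ℝ → ℝ) (σ : ℝ) (l : ℤ × ℤ) : ℝ :=
  (h (lb l) - h (ψ⁻¹ * lb l)) * |la l * lb l| ^ (-σ)

lemma abs_psi_inv : |ψ⁻¹| = φ := by
  rw [inv_goldenConj, abs_neg, abs_of_pos goldenRatio_pos]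

lemma hdiff_out {h α M L} (H : HF h α M L) {b : ℝ} (hb : 1 ≤ |b|) : h b - h (ψ⁻¹ * b) = 0 := by
  have := one_lt_goldenRatio
  rw [H.supp b (by linarith), H.supp (ψ⁻¹ * b), sub_zero]
  rw [abs_mul, abs_psi_inv]; nlinarith

lemma hdiff_in {h α M L} (H : HF h α M L) (hα : 0 < α) (hα1 : α ≤ 1) (b : ℝ) :
    |h b - h (ψ⁻¹ * b)| ≤ 3 * L * |b| ^ α := by
  have hL := H.L0
  refine (H.hol _ _).trans ?_
  have h3 : |b - ψ⁻¹ * b| ≤ 3 * |b| := by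
    rw [inv_goldenConj, show b - -φ * b = (1 + φ) * b by ring, abs_mul,
      abs_of_pos (by have := goldenRatio_pos; positivity)]
    have := goldenRatio_lt_two
    gcongr; linarith
  calc L * |b - ψ⁻¹ * b| ^ α ≤ L * (3 * |b|) ^ α := by gcongr
    _ = L * (3 ^ α * |b| ^ α) := by rw [Real.mul_rpow (by norm_num) (abs_nonneg _)]
    _ ≤ L * (3 ^ (1:ℝ) * |b| ^ α) := by
        gcongr
        · norm_num
    _ = _ := by rw [Real.rpow_one]; ring

lemma fJ_zero (h : ℝ → ℝ) {σ : ℝ} (hσ : 0 < σ) : fJ h σ 0 = 0 := by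
  rw [fJ, la_zero, zero_mul, abs_zero, Real.zero_rpow (by linarith), mul_zero]

lemma fJ_summable {h α M L} (H : HF h α M L) (hα : 0 < α) (hα1 : α ≤ 1) {σ : ℝ} (hσ : 1 < σ) :
    Summable (fJ h σ) := by
  have hL := H.L0
  refine (lattice_sum_b (prof_pow hα) hσ (C := 3 * L) (by positivity) (fJ_zero h (by linarith))
    (fun l hl => ?_)).1
  by_cases hb : |lb l| < 1
  · rw [if_pos ⟨abs_nonneg _, hb⟩, fJ, abs_mul,
      abs_of_nonneg (a := |la l * lb l| ^ (-σ)) (by positivity), ← mul_assoc]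
    gcongr
    exact hdiff_in H hα hα1 _
  · rw [if_neg (by intro h; exact hb h.2), fJ, hdiff_out H (not_lt.1 hb)]; simp

lemma hol_tendsto {h α M L} (H : HF h α M L) (hα : 0 < α) (b : ℝ) :
    Tendsto (fun n : ℕ => h (ψ ^ (n:ℤ) * b)) atTop (𝓝 (h 0)) := by
  have hp := inv_pos.2 goldenRatio_pos
  have hcont : ContinuousAt h 0 := by
    rw [ContinuousAt, tendsto_iff_dist_tendsto_zero]
    refine squeeze_zero (fun _ => dist_nonneg) (fun t => ?_) (g := fun t => L * |t - 0| ^ α) ?_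
    · rw [Real.dist_eq]; exact H.hol t 0
    · have : ContinuousAt (fun t : ℝ => L * |t - 0| ^ α) 0 := by
        apply ContinuousAt.mul continuousAt_const
        apply ContinuousAt.rpow_const (by fun_prop)
        right; exact hα.le
      have h2 := this.tendsto
      simp only [sub_zero, abs_zero, Real.zero_rpow hα.ne', mul_zero] at h2 ⊢
      exact h2
  apply hcont.tendsto.comp
  rw [tendsto_zero_iff_abs_tendsto_zero]
  have : (abs ∘ fun n : ℕ => ψ ^ (n:ℤ) * b) = fun n : ℕ => φ⁻¹ ^ n * |b| := by
    funext n; simp only [Function.comp, abs_mul, zpow_natCast, abs_psi_pow]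
  rw [this, ← zero_mul |b|]
  exact (tendsto_pow_atTop_nhds_zero_of_lt_one hp.le (inv_lt_one_of_one_lt₀ one_lt_goldenRatio)).mul_const _

lemma supp_tendsto {h α M L} (H : HF h α M L) {b : ℝ} (hb : b ≠ 0) :
    Tendsto (fun n : ℕ => h (ψ ^ (-(n:ℤ)) * b)) atTop (𝓝 0) := by
  have hbp : 0 < |b| := abs_pos.2 hb
  have h1 : Tendsto (fun n : ℕ => φ ^ n * |b|) atTop atTop :=
    (tendsto_pow_atTop_atTop_of_one_lt one_lt_goldenRatio).atTop_mul_const hbp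
  apply tendsto_const_nhds.congr'
  filter_upwards [h1.eventually_ge_atTop 1] with n hn
  rw [H.supp]
  rw [abs_mul, abs_conj_zpow, neg_neg, zpow_natCast]; linarith

lemma h_unit {h α M L} (H : HF h α M L) (s : ℤˣ) (x : ℝ) : h (((s:ℤ):ℝ) * x) = h x := by
  rcases Int.units_eq_one_or s with rfl | rfl
  · simp
  · simp [H.even]

lemma fJ_sum {h α M L} (H : HF h α M L) (hα : 0 < α) (hα1 : α ≤ 1) {σ : ℝ} (hσ : 1 < σ) :
    ∑' l, fJ h σ l = 2 * h 0 * ∑' i, nrm i ^ (-σ) := by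
  have hs := fJ_summable H hα hα1 hσ
  have hsupp := supp_enum (F := fJ h σ) (fJ_zero h (by linarith))
  rw [← enum_inj.tsum_eq hsupp]
  have hse : Summable fun x => fJ h σ (enum x) := hs.comp_injective enum_inj
  have hval : ∀ i k s, fJ h σ (enum (i, k, s)) =
      nrm i ^ (-σ) * (h (ψ ^ k * lb (rep i)) - h (ψ ^ (k-1) * lb (rep i))) := by
    intro i k s
    rw [fJ, nrm_enum, lb_enum, show ψ⁻¹ * (((s:ℤ):ℝ) * (ψ ^ k * lb (rep i))) =
      ((s:ℤ):ℝ) * (ψ ^ (k-1) * lb (rep i)) by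
        rw [zpow_sub₀ goldenConj_ne_zero, zpow_one]; ring, h_unit H, h_unit H]; ring
  rw [hse.tsum_prod, ← tsum_mul_left]
  apply tsum_congr
  intro i
  have hsi : Summable fun y : ℤ × ℤˣ => fJ h σ (enum (i, y)) := hse.prod_factor i
  have hlb : lb (rep i) ≠ 0 := by
    have := (rep_b i).2
    have hp := inv_pos.2 goldenRatio_pos
    intro h; linarith
  have hn := Real.rpow_pos_of_pos (nrm_pos i) (-σ)
  have hsk : Summable fun k : ℤ => (h (ψ ^ k * lb (rep i)) - h (ψ ^ (k-1) * lb (rep i))) := by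
    have h1 : Summable fun k : ℤ => fJ h σ (enum (i, k, 1)) :=
      hsi.comp_injective (i := fun k : ℤ => (k, (1 : ℤˣ))) (fun a b h => (Prod.ext_iff.1 h).1)
    simp only [hval] at h1
    exact (summable_mul_left_iff hn.ne').1 h1
  have ht := tele_int (g := fun k => h (ψ ^ k * lb (rep i))) hsk (hol_tendsto H hα _) (supp_tendsto H hlb)
  rw [hsi.tsum_prod]
  simp only [hval, tsum_fintype, Finset.sum_const]
  simp only [nsmul_eq_mul]
  rw [tsum_mul_left, tsum_mul_left, ht]
  simp
  ring

lemma fV_step {h α M L} (H : HF h α M L) (hα : 0 < α) (hα1 : α ≤ 1) {σ : ℝ} (hσ : 1 < σ) {β : ℝ}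
    (hβ : 0 < β) (hβα : β ≤ α) (hβσ : β ≤ σ - 1) :
    ∃ C : ℝ, ∀ n : ℕ, |∑' l, fV h σ (n+1) l - ∑' l, fV h σ n l - 2 * h 0 ^ 2 * ∑' i, nrm i ^ (-σ)| ≤
        C * (φ⁻¹ ^ (β / 2)) ^ n := by
  have hM := H.M0
  have hL := H.L0
  refine ⟨(2 * M + L) * (3 * L) * (2 * (∑' i, nrm i ^ (-(σ - β/2))) * ∑' j : ℕ, (φ⁻¹ ^ (α - β/2)) ^ j),
    fun n => ?_⟩
  have hp := inv_pos.2 goldenRatio_pos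
  have gp := pow_pos goldenRatio_pos n
  have hp1 : φ⁻¹ ≤ 1 := by have := phi_inv_lt; linarith
  have hJs := fJ_summable H hα hα1 hσ
  let e := φ⁻¹ ^ (n+1)
  have he : 0 < e := pow_pos hp _
  let Q : ℤ × ℤ → ℝ := fun l => (h (e * la l) - h 0) * fJ h σ l
  have hQ := lattice_sum_b (prof_pow (s := α - β/2) (by linarith)) (τ := σ - β/2) (by linarith)
    (C := (2 * M + L) * (3 * L) * e ^ (β/2)) (by positivity) (F := Q)
    (by simp only [Q]; rw [fJ_zero h (by linarith), mul_zero]) (fun l hl => by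
    by_cases hb : |lb l| < 1
    · have hU : (if 0 ≤ |lb l| ∧ |lb l| < 1 then |lb l| ^ (α - β/2) else 0) = |lb l| ^ (α - β/2) :=
        if_pos ⟨abs_nonneg _, hb⟩
      rw [hU]
      have hap : 0 < |la l| := abs_pos.2 (la_ne hl)
      have hbp : 0 < |lb l| := abs_pos.2 (lb_ne hl)
      have habp : 0 < |la l * lb l| := by rw [abs_mul]; positivity
      have k1 : |h (e * la l) - h 0| ≤ (2 * M + L) * (e * |la l|) ^ (β/2) := by
        have hz : 0 < e * |la l| := by positivity
        rcases le_total 1 (e * |la l|) with h1 | h1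
        · have : 1 ≤ (e * |la l|) ^ (β/2) := Real.one_le_rpow h1 (by linarith)
          calc |h (e * la l) - h 0| ≤ |h (e * la l)| + |h 0| := abs_sub _ _
            _ ≤ M + M := add_le_add (H.bd _) (H.bd _)
            _ ≤ (2 * M + L) * 1 := by linarith
            _ ≤ _ := by gcongr
        · have : (e * |la l|) ^ α ≤ (e * |la l|) ^ (β/2) :=
            Real.rpow_le_rpow_of_exponent_ge hz h1 (by linarith)
          calc |h (e * la l) - h 0| ≤ L * |e * la l - 0| ^ α := H.hol _ _
            _ = L * (e * |la l|) ^ α := by rw [sub_zero, abs_mul, abs_of_pos he]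
            _ ≤ (2 * M + L) * (e * |la l|) ^ (β/2) := by gcongr; linarith
      have k2 := hdiff_in H hα hα1 (lb l)
      simp only [Q]
      rw [fJ, abs_mul, abs_mul, abs_of_nonneg (a := |la l * lb l| ^ (-σ)) (by positivity)]
      calc |h (e * la l) - h 0| * (|h (lb l) - h (ψ⁻¹ * lb l)| * |la l * lb l| ^ (-σ))
          ≤ ((2 * M + L) * (e * |la l|) ^ (β/2)) * ((3 * L * |lb l| ^ α) * |la l * lb l| ^ (-σ)) := by
            gcongr
        _ = _ := by
            rw [show -(σ - β/2) = β/2 + -σ by ring, Real.rpow_add habp,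
              show α = (α - β/2) + β/2 by ring, Real.rpow_add hbp, Real.mul_rpow he.le hap.le,
              show (α - β/2 + β/2 - β/2) = α - β/2 by ring, abs_mul, Real.mul_rpow hap.le hbp.le,
              Real.mul_rpow hap.le hbp.le]
            ring
    · have hU : (if 0 ≤ |lb l| ∧ |lb l| < 1 then |lb l| ^ (α - β/2) else 0) = 0 :=
        if_neg (by intro h; exact hb h.2)
      rw [hU]; simp only [Q]; rw [fJ, hdiff_out H (not_lt.1 hb)]; simp)
  -- identity
  have hid : ∑' l, fV h σ (n+1) l - ∑' l, fV h σ n l - 2 * h 0 ^ 2 * ∑' i, nrm i ^ (-σ) = ∑' l, Q l := by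
    rw [← (fV_summable H hσ (n+1)).tsum_sub (fV_summable H hσ n)]
    have e1 : ∀ l, fV h σ (n+1) ((lT ^ (-((n+1:ℕ):ℤ))) l) - fV h σ n ((lT ^ (-((n+1:ℕ):ℤ))) l) =
        h 0 * fJ h σ l + Q l := by
      intro l
      simp only [Q]
      rw [fV, fV, lab_lTk, la_lTk, lb_lTk, fJ]
      have z1 : φ ^ (-((n+1:ℕ):ℤ)) = e := by
        simp only [e]; rw [zpow_neg, zpow_natCast, inv_pow]
      have z2 : ψ ^ (n+1) * (ψ ^ (-((n+1:ℕ):ℤ)) * lb l) = lb l := by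
        rw [zpow_neg, zpow_natCast]
        have := pow_ne_zero (n+1) goldenConj_ne_zero
        field_simp
      have z3 : ψ ^ n * (ψ ^ (-((n+1:ℕ):ℤ)) * lb l) = ψ⁻¹ * lb l := by
        rw [zpow_neg, zpow_natCast]
        have h0 := goldenConj_ne_zero
        have h1 := pow_ne_zero n h0
        rw [pow_succ, mul_inv, ← mul_assoc, ← mul_assoc, mul_inv_cancel₀ h1, one_mul]
      rw [z1, z2, z3]; ring
    rw [← Equiv.tsum_eq (lT ^ (-((n+1:ℕ):ℤ)))]
    simp only [e1]
    rw [(hJs.mul_left _).tsum_add hQ.1, tsum_mul_left, fJ_sum H hα hα1 hσ]; ring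
  rw [hid]
  have n1 : |∑' l, Q l| ≤ ∑' l, |Q l| := by
    have := norm_tsum_le_tsum_norm (f := Q) hQ.1.norm
    simpa only [Real.norm_eq_abs] using this
  refine n1.trans (hQ.2.trans ?_)
  have Z1 : 0 ≤ ∑' i, nrm i ^ (-(σ - β/2)) := tsum_nonneg fun i => by have := nrm_pos i; positivity
  have Z2 : 0 ≤ ∑' j : ℕ, (φ⁻¹ ^ (α - β/2)) ^ j := tsum_nonneg fun i => by positivity
  have he2 : e ^ (β/2) ≤ (φ⁻¹ ^ (β/2)) ^ n := by
    rw [← Real.rpow_natCast (φ⁻¹ ^ (β/2)), ← Real.rpow_mul hp.le, mul_comm, Real.rpow_mul hp.le,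
      Real.rpow_natCast]
    apply Real.rpow_le_rpow he.le _ (by linarith)
    exact pow_le_pow_of_le_one hp.le hp1 (Nat.le_succ n)
  calc _ = (2 * M + L) * (3 * L) * (2 * (∑' i, nrm i ^ (-(σ - β/2))) * ∑' j : ℕ, (φ⁻¹ ^ (α - β/2)) ^ j) *
        e ^ (β/2) := by ring
    _ ≤ _ := by gcongr

lemma fPhi_asymp {h α M L} (H : HF h α M L) (hα : 0 < α) (hα1 : α ≤ 1) {σ : ℝ} (hσ : 1 < σ) {β : ℝ}
    (hβ : 0 < β) (hβα : β ≤ α) (hβσ : β ≤ σ - 1) :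
    ∃ D K : ℝ, 0 ≤ K ∧ ∀ n : ℕ, 3 ≤ n →
      |∑' l, fPhi h σ n l - (2 * h 0 ^ 2 * ∑' i, nrm i ^ (-σ)) * n - D| ≤
        K * ((n + 1) * (φ⁻¹ ^ n) ^ (β / 2)) := by
  have hp := inv_pos.2 goldenRatio_pos
  obtain ⟨C1, hC10, h1⟩ := fPhi_sum H hα hα1 hσ hβ hβα hβσ
  obtain ⟨C2, h2⟩ := fV_step H hα hα1 hσ hβ hβα hβσ
  obtain ⟨D, K, hK, h3⟩ := geom_lemma (x := fun n => ∑' l, fV h σ n l) (by positivity)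
    (Real.rpow_lt_one hp.le (inv_lt_one_of_one_lt₀ one_lt_goldenRatio) (by linarith : 0 < β/2)) h2
  refine ⟨D + 2 * ∑' l, fE h σ l, C1 + K, by positivity, fun n hn => ?_⟩
  have i1 := h1 n hn
  have i2 := h3 n
  have he : (φ⁻¹ ^ (β/2)) ^ n = (φ⁻¹ ^ n) ^ (β/2) := by
    rw [← Real.rpow_natCast (φ⁻¹ ^ (β/2)), ← Real.rpow_mul hp.le, mul_comm, Real.rpow_mul hp.le,
      Real.rpow_natCast]
  rw [he] at i2
  have hr : 0 ≤ (φ⁻¹ ^ n) ^ (β/2) := by positivity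
  have i3 : K * (φ⁻¹ ^ n) ^ (β/2) ≤ K * ((n + 1) * (φ⁻¹ ^ n) ^ (β/2)) := by
    apply mul_le_mul_of_nonneg_left _ hK
    have : (0:ℝ) ≤ n := by positivity
    nlinarith
  have tri := abs_add_le (∑' l, fPhi h σ n l - ∑' l, fV h σ n l - 2 * ∑' l, fE h σ l)
    (∑' l, fV h σ n l - (2 * h 0 ^ 2 * ∑' i, nrm i ^ (-σ)) * n - D)
  rw [add_mul]
  calc _ = |(∑' l, fPhi h σ n l - ∑' l, fV h σ n l - 2 * ∑' l, fE h σ l) +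
    (∑' l, fV h σ n l - (2 * h 0 ^ 2 * ∑' i, nrm i ^ (-σ)) * n - D)| := by congr 1; ring
    _ ≤ _ := tri
    _ ≤ _ := by linarith

end PartE4

section PartF
lemma rpow_lip (e : ℝ) {m : ℝ} (hm : 0 < m) (hm1 : m ≤ 1) : ∃ C : ℝ, 0 ≤ C ∧
    ∀ s ∈ Set.Icc m 1, ∀ t ∈ Set.Icc m 1, |s ^ e - t ^ e| ≤ C * |s - t| := by
  have hc : ContinuousOn (fun t : ℝ => e * t ^ (e - 1)) (Set.Icc m 1) := by
    apply ContinuousOn.mul continuousOn_const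
    apply ContinuousOn.rpow_const continuousOn_id
    intro x hx; left; have := hx.1; simp only [id]; linarith
  obtain ⟨C, hC⟩ := isCompact_Icc.exists_bound_of_continuousOn hc
  refine ⟨C, (norm_nonneg _).trans (hC 1 ⟨hm1, le_rfl⟩), fun s hs t ht => ?_⟩
  have := (convex_Icc m (1:ℝ)).norm_image_sub_le_of_norm_hasDerivWithin_le
    (f := fun t : ℝ => t ^ e) (f' := fun t => e * t ^ (e - 1)) (C := C)
    (fun x hx => (Real.hasDerivAt_rpow_const (Or.inl (by linarith [hx.1]))).hasDerivWithinAt)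
    hC ht hs
  simpa [Real.norm_eq_abs] using this

lemma sinc_deriv {x : ℝ} (hx : 0 < x) : HasDerivAt sinc ((cos x * x - sin x * 1) / x ^ 2) x := by
  have h := (Real.hasDerivAt_sin x).div (hasDerivAt_id x) hx.ne'
  refine h.congr_of_eventuallyEq ?_
  filter_upwards [lt_mem_nhds hx] with y hy
  rw [sinc_of_ne_zero hy.ne']; rfl

lemma sinc_deriv_bd {x : ℝ} (hx : 0 < x) (hx4 : x ≤ 4) : |(cos x * x - sin x * 1) / x ^ 2| ≤ 2 := by
  rw [abs_div, abs_of_pos (a := x ^ 2) (by positivity), div_le_iff₀ (by positivity), abs_le]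
  have h1 := sin_gt_sub_cube hx
  have h2 := one_sub_sq_div_two_le_cos (x := x)
  have h3 := cos_le_one x
  have h4 := sin_lt hx
  have h5 : x ^ 3 ≤ 4 * x ^ 2 := by nlinarith [sq_nonneg x]
  have h6 : (1 - x ^ 2 / 2) * x ≤ cos x * x := by gcongr
  have h7 : cos x * x ≤ 1 * x := by gcongr
  have h8 : x ^ 3 = x ^ 2 * x := by ring
  constructor <;> nlinarith

lemma sinc_lip {a b : ℝ} (ha : 0 ≤ a) (ha4 : a ≤ 4) (hb : 0 ≤ b) (hb4 : b ≤ 4) :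
    |sinc a - sinc b| ≤ 2 * |a - b| := by
  have main : ∀ a b : ℝ, 0 ≤ a → b ≤ 4 → a ≤ b → |sinc b - sinc a| ≤ 2 * (b - a) := by
    intro a b ha hb hab
    have hD : Convex ℝ (Set.Icc (0:ℝ) 4) := convex_Icc (0:ℝ) 4
    have hi : ∀ x ∈ interior (Set.Icc (0:ℝ) 4), 0 < x ∧ x ≤ 4 := by
      intro x hx; rw [interior_Icc] at hx; exact ⟨hx.1, hx.2.le⟩
    have hdiff : DifferentiableOn ℝ sinc (interior (Set.Icc (0:ℝ) 4)) := fun x hx =>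
      (sinc_deriv (hi x hx).1).differentiableAt.differentiableWithinAt
    have u := hD.image_sub_le_mul_sub_of_deriv_le continuous_sinc.continuousOn hdiff (C := 2)
      (fun x hx => by rw [(sinc_deriv (hi x hx).1).deriv]; exact (abs_le.1 (sinc_deriv_bd (hi x hx).1 (hi x hx).2)).2)
      a ⟨ha, hab.trans hb⟩ b ⟨ha.trans hab, hb⟩ hab
    have l := hD.mul_sub_le_image_sub_of_le_deriv continuous_sinc.continuousOn hdiff (C := -2)
      (fun x hx => by rw [(sinc_deriv (hi x hx).1).deriv]; exact (abs_le.1 (sinc_deriv_bd (hi x hx).1 (hi x hx).2)).1)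
      a ⟨ha, hab.trans hb⟩ b ⟨ha.trans hab, hb⟩ hab
    rw [abs_le]; constructor <;> linarith
  rcases le_total a b with h | h
  · rw [abs_sub_comm, abs_sub_comm a b, abs_of_nonneg (sub_nonneg.2 h)]; exact main a b ha hb4 h
  · rw [abs_of_nonneg (sub_nonneg.2 h)]; exact main b a hb ha4 h

noncomputable def om (σ t : ℝ) : ℝ := sinc (π * min |t| (2/3)) ^ (-σ)

lemma om_arg (t : ℝ) : π * min |t| (2/3) ∈ Set.Icc 0 (2 * π / 3) := by
  have := pi_pos
  constructor
  · have : 0 ≤ min |t| (2/3) := le_min (abs_nonneg _) (by norm_num)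
    positivity
  · have : min |t| (2/3) ≤ 2/3 := min_le_right _ _
    nlinarith

lemma sinc_min : ∃ m : ℝ, 0 < m ∧ m ≤ 1 ∧ ∀ x ∈ Set.Icc 0 (2 * π / 3), m ≤ sinc x := by
  have hpi := pi_pos
  obtain ⟨x, hx, hmin⟩ := (isCompact_Icc (a := (0:ℝ)) (b := 2 * π / 3)).exists_isMinOn
    ⟨0, by constructor <;> positivity⟩ continuous_sinc.continuousOn
  refine ⟨sinc x, ?_, sinc_le_one x, fun y hy => hmin hy⟩
  rcases eq_or_lt_of_le hx.1 with h | h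
  · rw [← h]; simp
  · rw [sinc_of_ne_zero h.ne']
    exact div_pos (sin_pos_of_pos_of_lt_pi h (by linarith [hx.2])) h

lemma om_lip (σ : ℝ) : ∃ C : ℝ, 0 ≤ C ∧ ∀ s t, |om σ s - om σ t| ≤ C * |s - t| := by
  obtain ⟨m, hm, hm1, hmin⟩ := sinc_min
  obtain ⟨C, hC0, hC⟩ := rpow_lip (-σ) hm hm1
  have hpi := pi_pos
  have hpi4 := pi_le_four
  refine ⟨C * (2 * π), by positivity, fun s t => ?_⟩
  have hs := om_arg s
  have ht := om_arg t
  unfold om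
  refine (hC _ ⟨hmin _ hs, sinc_le_one _⟩ _ ⟨hmin _ ht, sinc_le_one _⟩).trans ?_
  rw [mul_assoc]
  apply mul_le_mul_of_nonneg_left _ hC0
  refine (sinc_lip hs.1 (by linarith [hs.2]) ht.1 (by linarith [ht.2])).trans ?_
  rw [← mul_sub, abs_mul, abs_of_pos hpi, mul_assoc]
  have : |min |s| (2/3) - min |t| (2/3)| ≤ |s - t| :=
    (abs_min_sub_min_le_max _ _ _ _).trans (by
      simp only [sub_self, abs_zero]
      exact max_le (abs_abs_sub_abs_le_abs_sub _ _) (abs_nonneg _))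
  gcongr

lemma om_zero (σ : ℝ) : om σ 0 = 1 := by
  unfold om
  rw [abs_zero, min_eq_left (by norm_num), mul_zero, sinc_zero, Real.one_rpow]

lemma om_even (σ t : ℝ) : om σ (-t) = om σ t := by unfold om; rw [abs_neg]

lemma om_eq (σ : ℝ) {t : ℝ} (h0 : t ≠ 0) (ht : |t| ≤ 2/3) :
    om σ t * (π * |t|) ^ (-σ) = (|sin (π * t)| ^ σ)⁻¹ := by
  have hpi := pi_pos
  have hta : 0 < |t| := abs_pos.2 h0
  have hs : 0 < sin (π * |t|) := sin_pos_of_pos_of_lt_pi (by positivity) (by nlinarith)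
  have e : |sin (π * t)| = sin (π * |t|) := by
    rcases abs_choice t with h | h
    · rw [h] at hs ⊢; exact abs_of_pos hs
    · rw [h] at hs ⊢; rw [mul_neg, sin_neg] at *; exact abs_of_neg (by linarith)
  unfold om
  rw [min_eq_left ht, sinc_of_ne_zero (by positivity), e,
    ← Real.mul_rpow (by positivity) (by positivity), div_mul_cancel₀ _ (by positivity),
    Real.rpow_neg hs.le]

noncomputable def chi (t : ℝ) : ℝ := max 0 (min 1 (2 - 3 * |t|))

lemma chi_nonneg (t) : 0 ≤ chi t := le_max_left _ _
lemma chi_le (t) : chi t ≤ 1 := max_le zero_le_one (min_le_left _ _)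
lemma chi_supp {t : ℝ} (h : 2/3 ≤ |t|) : chi t = 0 :=
  max_eq_left ((min_le_right _ _).trans (by linarith))
lemma chi_zero : chi 0 = 1 := by simp [chi]
lemma chi_even (t) : chi (-t) = chi t := by unfold chi; rw [abs_neg]
lemma chi_lip (s t : ℝ) : |chi s - chi t| ≤ 3 * |s - t| := by
  have h3 := abs_abs_sub_abs_le_abs_sub s t
  unfold chi
  refine (abs_max_sub_max_le_max _ _ _ _).trans ?_
  simp only [sub_self, abs_zero]
  refine max_le (by positivity) ((abs_min_sub_min_le_max _ _ _ _).trans ?_)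
  simp only [sub_self, abs_zero]
  refine max_le (by positivity) ?_
  rw [show 2 - 3 * |s| - (2 - 3 * |t|) = -(3 * (|s| - |t|)) by ring, abs_neg, abs_mul, abs_of_pos (by norm_num : (0:ℝ) < 3)]
  gcongr

lemma chi_part {t : ℝ} (h0 : 0 ≤ t) (h1 : t ≤ 1) : chi t + chi (t - 1) = 1 := by
  unfold chi
  rw [abs_of_nonneg h0, abs_of_nonpos (by linarith : t - 1 ≤ 0)]
  rcases le_total t (1/3) with h | h
  · rw [min_eq_left (by linarith), min_eq_right (by linarith), max_eq_right (by norm_num), max_eq_left (by linarith)]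
    ring
  · rcases le_total t (2/3) with h' | h'
    · rw [min_eq_right (by linarith), min_eq_right (by linarith), max_eq_right (by linarith), max_eq_right (by linarith)]
      ring
    · rw [min_eq_right (by linarith), min_eq_left (by linarith), max_eq_left (by linarith), max_eq_right (by norm_num)]
      ring

/-- bounded and globally Hoelder -/
structure BH (g : ℝ → ℝ) (α M L : ℝ) : Prop where
  M0 : 0 ≤ M
  L0 : 0 ≤ L
  bd : ∀ t, |g t| ≤ M
  hol : ∀ s t, |g s - g t| ≤ L * |s - t| ^ α

lemma BH.mul {g k : ℝ → ℝ} {α M L M' L'} (H : BH g α M L) (H' : BH k α M' L') :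
    BH (fun t => g t * k t) α (M * M') (M * L' + L * M') where
  M0 := mul_nonneg H.M0 H'.M0
  L0 := add_nonneg (mul_nonneg H.M0 H'.L0) (mul_nonneg H.L0 H'.M0)
  bd t := by rw [abs_mul]; exact mul_le_mul (H.bd t) (H'.bd t) (abs_nonneg _) H.M0
  hol s t := by
    have := H.M0
    have := H.L0
    have h := H.hol s t
    rw [show g s * k s - g t * k t = g s * (k s - k t) + (g s - g t) * k t by ring]
    calc _ ≤ |g s * (k s - k t)| + |(g s - g t) * k t| := abs_add_le _ _
      _ = |g s| * |k s - k t| + |g s - g t| * |k t| := by rw [abs_mul, abs_mul]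
      _ ≤ M * (L' * |s - t| ^ α) + (L * |s - t| ^ α) * M' := by
        gcongr
        · exact H.bd s
        · exact H'.hol s t
        · exact H'.bd t
      _ = _ := by ring

lemma BH_of_lip {g : ℝ → ℝ} {α M C : ℝ} (hα : 0 < α) (hα1 : α ≤ 1) (hM : 0 ≤ M) (hC : 0 ≤ C)
    (hb : ∀ t, |g t| ≤ M) (hl : ∀ s t, |g s - g t| ≤ C * |s - t|) : BH g α M (C + 2 * M) where
  M0 := hM
  L0 := by positivity
  bd := hb
  hol s t := by
    rcases le_total 1 |s - t| with h | h
    · have : 1 ≤ |s - t| ^ α := Real.one_le_rpow h hα.le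
      calc _ ≤ |g s| + |g t| := abs_sub _ _
        _ ≤ M + M := add_le_add (hb s) (hb t)
        _ ≤ (C + 2 * M) * 1 := by linarith
        _ ≤ _ := by gcongr
    · have : |s - t| ≤ |s - t| ^ α := by
        rcases eq_or_lt_of_le (abs_nonneg (s - t)) with h0 | h0
        · rw [← h0]; exact Real.rpow_nonneg le_rfl _
        · calc |s - t| = |s - t| ^ (1:ℝ) := (Real.rpow_one _).symm
            _ ≤ _ := Real.rpow_le_rpow_of_exponent_ge h0 h hα1
      calc _ ≤ C * |s - t| := hl s t
        _ ≤ C * |s - t| ^ α := by gcongr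
        _ ≤ _ := by gcongr; linarith

lemma f_int {f : ℝ → ℝ} (hper : ∀ t : ℝ, f (t + 1) = f t) (t : ℝ) (d : ℤ) : f (t + d) = f t := by
  have : Function.Periodic f 1 := hper
  have := this.int_mul d t
  simpa using this

lemma f_even {f : ℝ → ℝ} (hper : ∀ t : ℝ, f (t + 1) = f t) (hsym : ∀ t : ℝ, f t = f (1 - t)) 
    (t : ℝ) : f (-t) = f t := by
  rw [hsym (-t), sub_neg_eq_add, add_comm, hper]

lemma f_round {f : ℝ → ℝ} (hper : ∀ t : ℝ, f (t + 1) = f t) (hsym : ∀ t : ℝ, f t = f (1 - t)) 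
    (t : ℝ) : f t = f |t - round t| := by
  have h1 : f (t - round t) = f t := by
    have := f_int hper t (-(round t)); push_cast at this; rw [← sub_eq_add_neg] at this; exact this
  rcases abs_choice (t - round t) with h | h
  · rw [h, h1]
  · rw [h, f_even hper hsym, h1]

lemma f_BH {f : ℝ → ℝ} (hper : ∀ t : ℝ, f (t + 1) = f t) (hsym : ∀ t : ℝ, f t = f (1 - t)) 
    {α L : ℝ} (hα : 0 < α) (hL : 0 ≤ L) (hH : ∀ x ∈ Set.Ico (0 : ℝ) 1, ∀ y ∈ Set.Ico (0 : ℝ) 1,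
      |f x - f y| ≤ L * |x - y| ^ α) : BH f α (|f 0| + L) L := by
  have hr : ∀ t : ℝ, |t - round t| ∈ Set.Ico (0:ℝ) 1 := fun t =>
    ⟨abs_nonneg _, by have := abs_sub_round t; linarith⟩
  have hd : ∀ s t : ℝ, |s - round s| - |t - round t| ≤ |s - t| := by
    intro s t
    have h1 := round_le s (round t)
    have h2 := abs_sub_le s t (round t)
    linarith
  have hol : ∀ s t, |f s - f t| ≤ L * |s - t| ^ α := by
    intro s t
    rw [f_round hper hsym s, f_round hper hsym t]
    refine (hH _ (hr s) _ (hr t)).trans ?_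
    have : |(|s - round s|) - (|t - round t|)| ≤ |s - t| := by
      rw [abs_le]
      have h1 := hd s t
      have h2 := hd t s
      rw [abs_sub_comm t s] at h2
      constructor <;> linarith
    gcongr
  refine ⟨by positivity, hL, fun t => ?_, hol⟩
  rw [f_round hper hsym t]
  have h1 := hH _ (hr t) 0 (by constructor <;> norm_num)
  have h2 : |(|t - round t|) - 0| ^ α ≤ 1 := by
    rw [sub_zero, abs_abs]; exact Real.rpow_le_one (abs_nonneg _) (hr t).2.le hα.le
  have h3 := abs_sub_abs_le_abs_sub (f |t - round t|) (f 0)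
  nlinarith

noncomputable def hh (f : ℝ → ℝ) (σ t : ℝ) : ℝ := chi t * (f t * om σ t)

lemma om_bd (σ : ℝ) : ∃ M : ℝ, 0 ≤ M ∧ ∀ t, |om σ t| ≤ M := by
  obtain ⟨C, hC0, hC⟩ := om_lip σ
  have : ∀ t, om σ t = om σ (min |t| (2/3)) := by
    intro t; unfold om
    rw [abs_of_nonneg (le_min (abs_nonneg t) (by norm_num : (0:ℝ) ≤ 2/3)), min_assoc, min_self]
  refine ⟨1 + C, by positivity, fun t => ?_⟩
  rw [this]
  have h1 := hC (min |t| (2/3)) 0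
  rw [om_zero, sub_zero, abs_of_nonneg (a := min |t| (2/3)) (le_min (abs_nonneg t) (by norm_num))] at h1
  have h2 : C * min |t| (2/3) ≤ C * 1 := by
    gcongr; exact (min_le_right _ _).trans (by norm_num)
  have h3 := abs_sub_abs_le_abs_sub (om σ (min |t| (2/3))) 1
  rw [abs_one] at h3
  linarith

lemma hh_HF {f : ℝ → ℝ} (hper : ∀ t : ℝ, f (t + 1) = f t) (hsym : ∀ t : ℝ, f t = f (1 - t)) (σ : ℝ)
    {α : ℝ} (hα : 0 < α) (hα1 : α ≤ 1)
    (hHolder : ∃ L : ℝ, 0 ≤ L ∧ ∀ x ∈ Set.Ico (0 : ℝ) 1, ∀ y ∈ Set.Ico (0 : ℝ) 1,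
      |f x - f y| ≤ L * |x - y| ^ α) : ∃ M L : ℝ, HF (hh f σ) α M L := by
  obtain ⟨L, hL, hH⟩ := hHolder
  have b1 := f_BH hper hsym hα hL hH
  obtain ⟨C, hC0, hC⟩ := om_lip σ
  obtain ⟨M, hM0, hM⟩ := om_bd σ
  have b2 := BH_of_lip hα hα1 hM0 hC0 hM hC
  have b3 := BH_of_lip hα hα1 zero_le_one (by norm_num : (0:ℝ) ≤ 3)
    (fun t => by rw [abs_of_nonneg (chi_nonneg t)]; exact chi_le t) chi_lip
  have b := b3.mul (b1.mul b2)
  exact ⟨_, _, b.M0, b.L0, b.bd, fun t ht => by rw [hh, chi_supp ht, zero_mul], b.hol,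
    fun t => by rw [hh, hh, chi_even, om_even, f_even hper hsym]⟩

lemma hh_zero (f : ℝ → ℝ) (σ : ℝ) : hh f σ 0 = f 0 := by
  rw [hh, chi_zero, om_zero]; ring

/-- localized summand -/
noncomputable def gh (f : ℝ → ℝ) (σ t : ℝ) : ℝ := chi t * (f t / |sin (π * t)| ^ σ)

lemma gh_eq (f : ℝ → ℝ) {σ : ℝ} (hσ : 0 < σ) (t : ℝ) : gh f σ t = hh f σ t * (π * |t|) ^ (-σ) := by
  by_cases h0 : t = 0
  · subst h0
    rw [gh, mul_zero, sin_zero, abs_zero, mul_zero, Real.zero_rpow hσ.ne', div_zero,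
      Real.zero_rpow (by linarith)]; ring
  · rw [gh, hh]
    by_cases h1 : 2/3 ≤ |t|
    · rw [chi_supp h1]; ring
    · rw [mul_assoc, mul_assoc, om_eq σ h0 (by linarith), div_eq_mul_inv]

end PartF

section PartG
noncomputable def gg (f : ℝ → ℝ) (σ t : ℝ) : ℝ := f t / |sin (π * t)| ^ σ

lemma gg_int {f : ℝ → ℝ} (hper : ∀ t : ℝ, f (t + 1) = f t) (σ t : ℝ) (d : ℤ) :
    gg f σ (t + d) = gg f σ t := by
  unfold gg
  have e : |sin (π * (t + d))| = |sin (π * t)| := by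
    rw [mul_add, mul_comm π (d:ℝ), Real.sin_add_int_mul_pi, abs_mul]
    rw [abs_zpow]; simp
  rw [f_int hper, e]

lemma chi_sum (t : ℝ) : HasSum (fun d : ℤ => chi (t + d)) 1 := by
  have h : HasSum (fun d : ℤ => chi (t + d)) (∑ d ∈ ({-⌊t⌋, -⌊t⌋ - 1} : Finset ℤ), chi (t + d)) := by
    apply hasSum_sum_of_ne_finset_zero
    intro d hd
    simp only [Finset.mem_insert, Finset.mem_singleton, not_or] at hd
    apply chi_supp
    have f0 := Int.floor_le t
    have f1 := Int.lt_floor_add_one t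
    rcases lt_or_gt_of_ne hd.1 with h | h
    · have h2 : d ≤ -⌊t⌋ - 2 := by have := hd.2; omega
      have h3 : (d:ℝ) ≤ -⌊t⌋ - 2 := by exact_mod_cast h2
      rw [abs_of_nonpos (by linarith)]; linarith
    · have h2 : -⌊t⌋ + 1 ≤ d := by omega
      have h3 : -(⌊t⌋:ℝ) + 1 ≤ d := by exact_mod_cast h2
      rw [abs_of_nonneg (by linarith)]; linarith
  rw [Finset.sum_pair (by omega)] at h
  have e := chi_part (Int.fract_nonneg t) (Int.fract_lt_one t).le
  convert h using 1
  rw [← e]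
  push_cast
  unfold Int.fract
  congr 2
  ring

lemma gh_sum {f : ℝ → ℝ} (hper : ∀ t : ℝ, f (t + 1) = f t) (σ t : ℝ) :
    HasSum (fun d : ℤ => gh f σ (t + d)) (gg f σ t) := by
  have h := (chi_sum t).mul_right (gg f σ t)
  rw [one_mul] at h
  have this : (fun d : ℤ => gh f σ (t+d)) = fun d : ℤ => chi (t+d) * gg f σ t := by
    funext d
    rw [← gg_int hper σ t d]
    rfl
  rw [this]; exact h

lemma gh_supp (f : ℝ → ℝ) (σ : ℝ) {t : ℝ} (h : gh f σ t ≠ 0) : |t| < 2/3 := by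
  by_contra hc; apply h; rw [gh, chi_supp (not_lt.1 hc), zero_mul]

lemma gg_zero (f : ℝ → ℝ) {σ : ℝ} (hσ : 0 < σ) : gg f σ 0 = 0 := by
  unfold gg; rw [mul_zero, sin_zero, abs_zero, Real.zero_rpow hσ.ne', div_zero]

lemma aux_e1 {N : ℝ} (h : N ≠ 0) (m k : ℝ) : (m + N * k) / N = m / N + k := by field_simp

lemma aux_e2 {N : ℝ} (h : N ≠ 0) (A m k : ℝ) : A * (m + N * k) / N = A * m / N + A * k := by
  field_simp

lemma lattice_id {f : ℝ → ℝ} (hper : ∀ t : ℝ, f (t + 1) = f t) {σ : ℝ} (hσ : 0 < σ) {N : ℕ} (hN : 0 < N) (A : ℕ) :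
    ∑' l : ℤ × ℤ, gh f σ (l.1 / N) * gh f σ (A * l.1 / N + l.2) =
      ∑ m ∈ Finset.Ico 1 N, gg f σ (m / N) * gg f σ (A * m / N) := by
  have hNr : (0:ℝ) < N := by exact_mod_cast hN
  have : NeZero N := ⟨hN.ne'⟩
  have habs1 : ∀ c : ℤ, gh f σ (c / N) ≠ 0 → |(c:ℝ)| < N := by
    intro c h
    have := gh_supp f σ h
    rw [abs_div, abs_of_pos hNr, div_lt_iff₀ hNr] at this
    linarith
  have hs : Summable fun l : ℤ × ℤ => gh f σ (l.1 / N) * gh f σ (A * l.1 / N + l.2) := by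
    apply summable_of_hasFiniteSupport
    apply Set.Finite.subset (Set.Finite.prod (Set.finite_Icc (-(N:ℤ)) N) (Set.finite_Icc (-((A:ℤ)+1)) (A+1)))
    rintro ⟨c, d⟩ hl
    have h1 := habs1 c (left_ne_zero_of_mul hl)
    have h2 := gh_supp f σ (right_ne_zero_of_mul hl)
    simp only at h2
    have h3 : |(A:ℝ) * c / N| ≤ A := by
      rw [abs_div, abs_mul, abs_of_pos hNr, div_le_iff₀ hNr, abs_of_nonneg (by positivity : (0:ℝ) ≤ A)]
      gcongr
    have h4 : |(d:ℝ)| ≤ |(A:ℝ) * c / N + d| + |(A:ℝ) * c / N| := by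
      have := abs_sub ((A:ℝ) * c / N + d) (A * c / N); simpa using this
    have h5 : |(d:ℝ)| ≤ A + 1 := by linarith
    have h6 : |d| ≤ (A:ℤ) + 1 := by exact_mod_cast h5
    have h7 : |c| ≤ (N:ℤ) := by exact_mod_cast h1.le
    exact ⟨abs_le.1 h7, abs_le.1 h6⟩
  rw [hs.tsum_prod]
  simp only [tsum_mul_left, (gh_sum hper σ _).tsum_eq]
  have hs2 : Summable fun c : ℤ => gh f σ (c / N) * gg f σ (A * c / N) := by
    apply summable_of_hasFiniteSupport
    apply Set.Finite.subset (Set.finite_Icc (-(N:ℤ)) N)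
    intro c hl
    have h1 := habs1 c (left_ne_zero_of_mul hl)
    have h7 : |c| ≤ (N:ℤ) := by exact_mod_cast h1.le
    exact abs_le.1 h7
  let E : Fin N × ℤ ≃ ℤ := (Equiv.prodComm _ _).trans (Int.divModEquiv N).symm
  have hE : ∀ (m : Fin N) (k : ℤ), ((E (m, k) : ℤ) : ℝ) = m + N * k := by
    intro m k
    have : E (m, k) = k * N + m := rfl
    rw [this]; push_cast; ring
  rw [← Equiv.tsum_eq E]
  have hs3 : Summable fun x => gh f σ ((E x : ℤ) / N) * gg f σ (A * (E x : ℤ) / N) :=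
    (Equiv.summable_iff E).2 hs2
  rw [hs3.tsum_prod, tsum_fintype]
  have hv : ∀ (m : Fin N) (k : ℤ), gh f σ ((E (m, k) : ℤ) / N) * gg f σ (A * (E (m, k) : ℤ) / N) =
      gh f σ ((m:ℕ) / N + k) * gg f σ (A * (m:ℕ) / N) := by
    intro m k
    have e1 : (((m:ℕ):ℝ) + N * k) / N = (m:ℕ) / N + k := aux_e1 hNr.ne' _ _
    have e2 : gg f σ (A * (((m:ℕ):ℝ) + N * k) / N) = gg f σ (A * (m:ℕ) / N) := by
      rw [← gg_int hper σ (A * (m:ℕ) / N) (A * k)]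
      push_cast; rw [aux_e2 hNr.ne']
    rw [hE, e1, e2]
  simp only [hv, tsum_mul_right, (gh_sum hper σ _).tsum_eq]
  rw [Fin.sum_univ_eq_sum_range (fun m : ℕ => gg f σ ((m:ℝ) / N) * gg f σ (A * (m:ℝ) / N)),
    Finset.range_eq_Ico, Finset.sum_eq_sum_Ico_succ_bot hN]
  simp [gg_zero f hσ]

lemma la_Y {n : ℕ} (hn : 1 ≤ n) (l : ℤ × ℤ) :
    φ ^ n * la l + ψ ^ n * lb l = √5 * (Nat.fib (n-1) * l.1 + Nat.fib n * l.2) := by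
  obtain ⟨k, rfl⟩ := Nat.exists_eq_add_of_le' hn
  rw [Nat.add_sub_cancel, Real.coe_fib_eq, Real.coe_fib_eq, la, lb]
  have h5 : √5 ≠ 0 := by positivity
  have h := goldenRatio_mul_goldenConj
  generalize φ = x at h ⊢
  generalize ψ = y at h ⊢
  field_simp
  linear_combination (-(x ^ k) * (l.1:ℝ) + y ^ k * l.1) * h

lemma fib_q (n : ℕ) : (Nat.fib n : ℝ) = φ ^ n * (1 - (ψ / φ) ^ n) / √5 := by
  have := pow_pos goldenRatio_pos n
  have e : (ψ / φ) ^ n = ψ ^ n / φ ^ n := div_pow ψ φ n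
  have e2 : φ ^ n * (ψ ^ n / φ ^ n) = ψ ^ n := by
    rw [mul_comm]; exact div_mul_cancel₀ _ this.ne'
  rw [Real.coe_fib_eq, e, mul_sub, mul_one, e2]

lemma gh_fPhi {f : ℝ → ℝ} {σ : ℝ} (hσ : 0 < σ) {n : ℕ} (hn : 3 ≤ n) (l : ℤ × ℤ) :
    1 / (Nat.fib n : ℝ) ^ σ * (gh f σ (l.1 / Nat.fib n) *
      gh f σ (Nat.fib (n-1) * l.1 / Nat.fib n + l.2)) =
      (5:ℝ) ^ (σ / 2) / π ^ (2 * σ) * fPhi (hh f σ) σ n l := by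
  have gp := pow_pos goldenRatio_pos n
  have hq := abs_le.1 (q_bd hn)
  have h1q : 0 < 1 - (ψ / φ) ^ n := by linarith [hq.2]
  have h5 : 0 < √5 := by positivity
  have hNpos : 0 < (Nat.fib n : ℝ) := by exact_mod_cast Nat.fib_pos.2 (by omega)
  have hpi := pi_pos
  rw [fPhi, la_Y (by omega), la_add_lb]
  have a1 : φ⁻¹ ^ n * (√5 * l.1) / (1 - (ψ / φ) ^ n) = l.1 / Nat.fib n := by
    rw [fib_q, inv_pow]; field_simp
  have a2 : φ⁻¹ ^ n * (√5 * (Nat.fib (n-1) * l.1 + Nat.fib n * l.2)) / (1 - (ψ / φ) ^ n) =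
      (Nat.fib (n-1) * l.1 + Nat.fib n * l.2) / Nat.fib n := by
    rw [div_eq_div_iff h1q.ne' hNpos.ne', inv_pow]
    have := fib_q n
    have h : (φ ^ n)⁻¹ * (√5 * (Nat.fib n : ℝ)) = 1 - (ψ / φ) ^ n := by
      rw [this]; field_simp
    linear_combination (Nat.fib (n-1) * l.1 + Nat.fib n * l.2 : ℝ) * h
  have a3 : (Nat.fib (n-1) * l.1 / Nat.fib n + l.2 : ℝ) =
      (Nat.fib (n-1) * l.1 + Nat.fib n * l.2) / Nat.fib n := by field_simp
  rw [a1, a2, a3, gh_eq f hσ, gh_eq f hσ]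
  set Y : ℝ := Nat.fib (n-1) * l.1 + Nat.fib n * l.2
  have b : ∀ z : ℝ, (π * |z / Nat.fib n|) ^ (-σ) = (π ^ σ)⁻¹ * (Nat.fib n : ℝ) ^ σ * |z| ^ (-σ) := by
    intro z
    rw [abs_div, abs_of_pos hNpos, Real.mul_rpow hpi.le (by positivity),
      Real.div_rpow (abs_nonneg _) hNpos.le, Real.rpow_neg hpi.le, Real.rpow_neg hNpos.le, div_inv_eq_mul]
    ring
  have c : ∀ z : ℝ, |√5 * z| ^ (-σ) = (√5 ^ σ)⁻¹ * |z| ^ (-σ) := by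
    intro z
    rw [abs_mul, abs_of_pos h5, Real.mul_rpow h5.le (abs_nonneg _), Real.rpow_neg h5.le]
  have d : (5:ℝ) ^ (σ / 2) = √5 ^ σ := by
    rw [Real.sqrt_eq_rpow, ← Real.rpow_mul (by norm_num)]; congr 1; ring
  have e : (Nat.fib n : ℝ) ^ σ = (φ ^ n) ^ σ * (1 - (ψ / φ) ^ n) ^ σ / √5 ^ σ := by
    rw [fib_q, Real.div_rpow (by positivity) h5.le, Real.mul_rpow gp.le h1q.le]
  have p2 : π ^ (2 * σ) = π ^ σ * π ^ σ := by rw [← Real.rpow_add hpi]; congr 1; ring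
  rw [b, b, c, c, d, p2]
  have n0 : 0 < (Nat.fib n : ℝ) ^ σ := Real.rpow_pos_of_pos hNpos _
  have p0 : 0 < π ^ σ := Real.rpow_pos_of_pos hpi _
  have s0 : 0 < √5 ^ σ := Real.rpow_pos_of_pos h5 _
  have e' : (φ ^ n) ^ σ * (1 - (ψ / φ) ^ n) ^ σ = (Nat.fib n : ℝ) ^ σ * √5 ^ σ := by
    rw [e]; field_simp
  calc _ = (Nat.fib n : ℝ) ^ σ * ((π ^ σ)⁻¹ * (π ^ σ)⁻¹) * (hh f σ (l.1 / Nat.fib n) *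
        hh f σ (Y / Nat.fib n) * |(l.1:ℝ)| ^ (-σ) * |Y| ^ (-σ)) := by field_simp
    _ = ((Nat.fib n : ℝ) ^ σ * √5 ^ σ) * (√5 ^ σ)⁻¹ * ((π ^ σ)⁻¹ * (π ^ σ)⁻¹) * (hh f σ (l.1 / Nat.fib n) *
        hh f σ (Y / Nat.fib n) * |(l.1:ℝ)| ^ (-σ) * |Y| ^ (-σ)) := by field_simp
    _ = _ := by rw [← e']; field_simp

lemma S_eq {f : ℝ → ℝ} (hper : ∀ t : ℝ, f (t + 1) = f t) {σ : ℝ} (hσ : 0 < σ) {n : ℕ} (hn : 3 ≤ n) :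
    (1 / (Nat.fib n : ℝ) ^ σ) *
          ∑ m ∈ Finset.Ico 1 (Nat.fib n),
            f ((m : ℝ) / Nat.fib n) / |Real.sin (π * m / Nat.fib n)| ^ σ *
              (f ((Nat.fib (n - 1) : ℝ) * m / Nat.fib n) /
                |Real.sin (π * Nat.fib (n - 1) * m / Nat.fib n)| ^ σ) =
      (5:ℝ) ^ (σ / 2) / π ^ (2 * σ) * ∑' l, fPhi (hh f σ) σ n l := by
  rw [← tsum_mul_left]
  simp only [← gh_fPhi hσ hn]
  rw [tsum_mul_left, lattice_id hper hσ (Nat.fib_pos.2 (by omega))]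
  congr 1
  apply Finset.sum_congr rfl
  intro m _
  unfold gg
  congr 5 <;> ring_nf

end PartG

section PartH
lemma eta_nrm (i : ℕ) : eta (i + 1) = nrm i := by
  have hb := rep_b i
  have ha := rep_a i
  have hp : phi = φ := rfl
  have g2 : φ ^ 2 = φ + 1 := goldenRatio_sq
  have gi : φ⁻¹ = φ - 1 := by
    have := goldenRatio_sq
    have hpos := goldenRatio_pos
    symm
    apply eq_inv_of_mul_eq_one_left
    linear_combination this
  have hpsi : ψ = 1 - φ := by linarith [goldenRatio_add_goldenConj]
  have g1 := one_lt_goldenRatio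
  have gl := goldenRatio_lt_two
  obtain ⟨d, hd⟩ : ∃ d : ℤ, d = ⌊((i:ℝ)+1) * φ⌋ := ⟨_, rfl⟩
  have hr : rep i = ((i:ℤ), d) := by rw [hd]; rfl
  have hd' : ⌊phi * ((i+1 : ℕ):ℝ)⌋ = d := by
    rw [hd, hp]; push_cast; congr 1; ring
  have hbe : lb (rep i) = i * φ - d := by rw [hr, lb]; simp
  have hae : la (rep i) = d - i * ψ := by rw [hr, la]; simp
  rw [hbe, gi] at hb
  have w1 : W (i+1) 1 = d + i := by
    rw [W, hd', Int.floor_eq_iff, hp]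
    push_cast
    constructor <;> nlinarith [hb.1, hb.2]
  have w2 : W (i+1) 2 = 2 * d + i := by
    have : W (i+1) 2 = W (i+1) 1 + d := by
      rw [W, W, hd', hp, g2, ← Int.floor_add_intCast]; congr 1; ring
    rw [this, w1]; ring
  rw [eta, wplus, wminus, w1, w2, hp, gi, nrm]
  rw [hae] at ha
  have hapos : 0 < (d:ℝ) - i * ψ := by
    have : (0:ℝ) ≤ i := by positivity
    linarith
  rw [hae, hbe, abs_of_neg (mul_neg_of_pos_of_neg hapos (by linarith [hb.2])), hpsi]
  push_cast
  have e1 : (φ - 1) ^ 2 * ((d:ℝ) + i) + (φ - 1) * (2 * d + i) = d * φ + i := by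
    linear_combination ((d:ℝ) + i) * g2
  have e2 : φ ^ 2 * ((d:ℝ) + i) - φ * (2 * d + i) = d * (1 - φ) + i := by
    linear_combination ((d:ℝ) + i) * g2
  rw [e1, e2]
  linear_combination ((d:ℝ) ^ 2 + (i:ℝ) ^ 2) * g2

lemma main_aux
    (σ : ℝ) (hσ : 1 < σ) (f : ℝ → ℝ)
    (hper : ∀ t : ℝ, f (t + 1) = f t)
    (hsym : ∀ t : ℝ, f t = f (1 - t))
    (α : ℝ) (hα0 : 0 < α) (hα1 : α ≤ 1)
    (hHolder : ∃ L : ℝ, 0 ≤ L ∧ ∀ x ∈ Set.Ico (0 : ℝ) 1, ∀ y ∈ Set.Ico (0 : ℝ) 1,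
      |f x - f y| ≤ L * |x - y| ^ α) :
    ∃ D K : ℝ, 0 < K ∧ ∃ N₀ : ℕ, ∀ n : ℕ, N₀ ≤ n →
      |(1 / (Nat.fib n : ℝ) ^ σ) *
          ∑ m ∈ Finset.Ico 1 (Nat.fib n),
            f ((m : ℝ) / Nat.fib n) / |Real.sin (π * m / Nat.fib n)| ^ σ *
              (f ((Nat.fib (n - 1) : ℝ) * m / Nat.fib n) /
                |Real.sin (π * Nat.fib (n - 1) * m / Nat.fib n)| ^ σ)
        - (2 * f 0 ^ 2 * (5 : ℝ) ^ (σ / 2) / π ^ (2 * σ) * ∑' i : ℕ, 1 / eta (i + 1) ^ σ) * n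
        - D|
      ≤ K * (n : ℝ) ^ 2 / phi ^ (min α (σ - 1) * n / 2) := by
  obtain ⟨M, L, H⟩ := hh_HF hper hsym σ hα0 hα1 hHolder
  have hβ : 0 < min α (σ - 1) := lt_min hα0 (by linarith)
  obtain ⟨D, K, hK, h⟩ := fPhi_asymp H hα0 hα1 hσ hβ (min_le_left _ _) (min_le_right _ _)
  rw [hh_zero] at h
  have hP : 0 < (5:ℝ) ^ (σ / 2) / π ^ (2 * σ) :=
    div_pos (Real.rpow_pos_of_pos (by norm_num) _) (Real.rpow_pos_of_pos pi_pos _)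
  have hsum : ∑' i : ℕ, 1 / eta (i + 1) ^ σ = ∑' i, nrm i ^ (-σ) := by
    congr 1; funext i
    rw [eta_nrm, Real.rpow_neg (nrm_pos i).le, one_div]
  rw [hsum]
  refine ⟨(5:ℝ) ^ (σ / 2) / π ^ (2 * σ) * D, 2 * ((5:ℝ) ^ (σ / 2) / π ^ (2 * σ)) * K + 1,
    by positivity, 3, ?_⟩
  intro n hn
  have h1 := h n hn
  rw [S_eq hper (by linarith) hn]
  generalize (∑' l, fPhi (hh f σ) σ n l) = T at h1 ⊢
  generalize (∑' i, nrm i ^ (-σ)) = Q at h1 ⊢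
  generalize min α (σ - 1) = β at h1 ⊢
  have hpw : (φ⁻¹ ^ n) ^ (β / 2) = (phi ^ (β * n / 2))⁻¹ := by
    have hp : phi = φ := rfl
    have g := goldenRatio_pos
    rw [hp, inv_pow, Real.inv_rpow (by positivity), ← Real.rpow_natCast, ← Real.rpow_mul g.le]
    congr 2; ring
  rw [hpw] at h1
  have hpos : 0 < (phi ^ (β * n / 2))⁻¹ := by
    have hp : phi = φ := rfl
    have g := goldenRatio_pos
    rw [hp]; positivity
  rw [div_eq_mul_inv _ (phi ^ (β * n / 2))]
  generalize (phi ^ (β * n / 2))⁻¹ = R at h1 hpos ⊢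
  have e0 : 2 * f 0 ^ 2 * (5 : ℝ) ^ (σ / 2) / π ^ (2 * σ) = 2 * f 0 ^ 2 * ((5 : ℝ) ^ (σ / 2) / π ^ (2 * σ)) := by ring
  rw [e0]
  generalize (5:ℝ) ^ (σ / 2) / π ^ (2 * σ) = P at hP ⊢
  have e : P * T - 2 * f 0 ^ 2 * P * Q * n - P * D = P * (T - 2 * f 0 ^ 2 * Q * n - D) := by ring
  rw [e, abs_mul, abs_of_pos hP]
  have hn1 : (3:ℝ) ≤ n := by exact_mod_cast hn
  have hn2 : (n:ℝ) + 1 ≤ 2 * n ^ 2 := by nlinarith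
  calc P * |T - 2 * f 0 ^ 2 * Q * n - D| ≤ P * (K * ((n + 1) * R)) := by gcongr
    _ ≤ P * (K * ((2 * n ^ 2) * R)) := by gcongr
    _ ≤ P * (K * ((2 * n ^ 2) * R)) + n ^ 2 * R := by
      have : 0 ≤ (n:ℝ) ^ 2 * R := by positivity
      linarith
    _ = _ := by ring

end PartH

end FibProof

/-- Precise asymptotics of tensor product sums over Fibonacci lattices:
the sum behaves like `C·n + D + O(n²/φ^{min{α,σ−1}n/2})` with
`C = 2 f(0)² 5^{σ/2} π^{−2σ} Σ_{i≥1} η_i^{−σ}`. -/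
theorem fibonacci_lattice_asymptotics
    (σ : ℝ) (hσ : 1 < σ) (f : ℝ → ℝ)
    (hper : ∀ t : ℝ, f (t + 1) = f t)
    (hsym : ∀ t : ℝ, f t = f (1 - t))
    (α : ℝ) (hα0 : 0 < α) (hα1 : α ≤ 1)
    (hHolder : ∃ L : ℝ, 0 ≤ L ∧ ∀ x ∈ Set.Ico (0 : ℝ) 1, ∀ y ∈ Set.Ico (0 : ℝ) 1,
      |f x - f y| ≤ L * |x - y| ^ α) :
    ∃ D K : ℝ, 0 < K ∧ ∃ N₀ : ℕ, ∀ n : ℕ, N₀ ≤ n →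
      |(1 / (Nat.fib n : ℝ) ^ σ) *
          ∑ m ∈ Finset.Ico 1 (Nat.fib n),
            f ((m : ℝ) / Nat.fib n) / |Real.sin (π * m / Nat.fib n)| ^ σ *
              (f ((Nat.fib (n - 1) : ℝ) * m / Nat.fib n) /
                |Real.sin (π * Nat.fib (n - 1) * m / Nat.fib n)| ^ σ)
        - (2 * f 0 ^ 2 * (5 : ℝ) ^ (σ / 2) / π ^ (2 * σ) * ∑' i : ℕ, 1 / eta (i + 1) ^ σ) * n
        - D|
      ≤ K * (n : ℝ) ^ 2 / phi ^ (min α (σ - 1) * n / 2) := by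
  exact main_aux σ hσ f hper hsym α hα0 hα1 hHolder
end

section
/- For every positive integer i, the real number η_i = −w_+(i)w_−(i) is a positive integer, and for every integer k ≥ 2 it holds that η_i = (−1)^k ( W_{i,k}² − W_{i,k} W_{i,k−1} − W_{i,k−1}² ). -/
open Real

lemma phi_sq : phi ^ 2 = phi + 1 := by
  have h := Real.sq_sqrt (show (0 : ℝ) ≤ 5 by norm_num)
  unfold phi
  nlinarith

lemma phi_gt_one : 1 < phi := by
  have h : (1 : ℝ) < Real.sqrt 5 := by
    rw [Real.lt_sqrt] <;> norm_num
  unfold phi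
  linarith

lemma phi_inv : phi⁻¹ = phi - 1 := by
  have h := phi_gt_one
  apply inv_eq_of_mul_eq_one_right
  nlinarith [phi_sq]

lemma phi_irr : Irrational phi := Real.goldenRatio_irrational

lemma eta_eq (i : ℕ) :
    eta i = (W i 2 : ℝ) ^ 2 - (W i 2 : ℝ) * (W i 1 : ℝ) - (W i 1 : ℝ) ^ 2 := by
  unfold eta wplus wminus
  have h1 : phi⁻¹ * phi = 1 := inv_mul_cancel₀ (by linarith [phi_gt_one])
  have h2 := phi_inv
  generalize phi⁻¹ = q at *
  generalize (W i 1 : ℝ) = a at *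
  generalize (W i 2 : ℝ) = b at *
  have e : (q ^ 2 * a + q * b) * (phi ^ 2 * a - phi * b)
      = (q * phi) * ((q * phi) * a ^ 2 + (phi - q) * (a * b) - b ^ 2) := by ring
  rw [e, h1, h2]
  ring

lemma W_two (i : ℕ) : W i 2 = W i 1 + ⌊phi * i⌋ := by
  simp only [W]
  rw [phi_sq, add_mul, one_mul, Int.floor_add_intCast]

lemma eta_pos (i : ℕ) (hi : 0 < i) : 0 < eta i := by
  have hp := phi_gt_one
  have hi1 : (1 : ℝ) ≤ i := by exact_mod_cast hi
  have hn : 1 ≤ ⌊phi * i⌋ := by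
    rw [Int.le_floor]
    push_cast
    nlinarith
  rw [eta_eq, W_two]
  have ha : W i 1 = ⌊phi * (⌊phi * i⌋ : ℝ)⌋ := by simp only [W]
  rw [ha]
  generalize ⌊phi * i⌋ = n at *
  have hn1 : (1 : ℝ) ≤ n := by exact_mod_cast hn
  have hle := Int.floor_le (phi * (n : ℝ))
  have h0 : 0 ≤ ⌊phi * (n : ℝ)⌋ := Int.floor_nonneg.mpr (by nlinarith)
  have hne : ((⌊phi * (n : ℝ)⌋ : ℤ) : ℝ) ≠ phi * n := by
    intro h
    exact (phi_irr.mul_intCast (by omega : n ≠ 0)).ne_int _ h.symm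
  have hlt := lt_of_le_of_ne hle hne
  generalize ⌊phi * (n : ℝ)⌋ = a at *
  have h0' : (0 : ℝ) ≤ a := by exact_mod_cast h0
  have hprod : 0 < (phi * n - a) * (n * (phi - 1) + a) := by
    apply mul_pos (by linarith)
    nlinarith
  have e : (phi * n - a) * (n * (phi - 1) + a)
      = (phi ^ 2 - phi) * (n : ℝ) ^ 2 + n * a - a ^ 2 := by ring
  rw [e, phi_sq] at hprod
  push_cast
  nlinarith

/-- `η_i = −w₊(i)w₋(i)` is a positive integer and for every `k ≥ 2` it equals
`(−1)^k (W_{i,k}² − W_{i,k}W_{i,k−1} − W_{i,k−1}²)`. -/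
theorem eta_pos_int_and_formula (i : ℕ) (hi : 0 < i) :
    (∃ m : ℕ, 0 < m ∧ eta i = (m : ℝ)) ∧
      ∀ k : ℕ, 2 ≤ k →
        eta i = (-1 : ℝ) ^ k *
          (((W i k : ℝ)) ^ 2 - (W i k : ℝ) * (W i (k - 1) : ℝ) - ((W i (k - 1) : ℝ)) ^ 2) := by
  refine ⟨?_, ?_⟩
  · have hpos := eta_pos i hi
    have he : eta i = (((W i 2) ^ 2 - W i 2 * W i 1 - (W i 1) ^ 2 : ℤ) : ℝ) := by
      rw [eta_eq]
      push_cast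
      rfl
    rw [he] at hpos ⊢
    generalize (W i 2) ^ 2 - W i 2 * W i 1 - (W i 1) ^ 2 = z at *
    have hz : 0 < z := by exact_mod_cast hpos
    lift z to ℕ using hz.le
    exact ⟨z, by exact_mod_cast hz, by simp⟩
  · intro k hk
    induction k, hk using Nat.le_induction with
    | base => rw [eta_eq]; norm_num
    | succ k hk ih =>
      obtain ⟨j, rfl⟩ := Nat.exists_eq_add_of_le' hk
      rw [ih]
      have e1 : j + 2 + 1 - 1 = j + 2 := by omega
      have e2 : j + 2 - 1 = j + 1 := by omega
      have e3 : W i (j + 2 + 1) = W i (j + 2) + W i (j + 1) := by rw [W]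
      rw [e1, e2, e3]
      push_cast
      ring
end

section
/- For all positive integers i and k it holds that W_{i,k+1} = ⌊ φ W_{i,k} + φ^{−1} ⌋. -/
open Real

lemma phi_facts : phi ^ 2 = phi + 1 ∧ 1 < phi ∧ phi < 2 ∧ phi⁻¹ = phi - 1 := by
  have h5 : Real.sqrt 5 ^ 2 = 5 := Real.sq_sqrt (by norm_num)
  have h0 : 0 ≤ Real.sqrt 5 := Real.sqrt_nonneg 5
  have hsq : phi ^ 2 = phi + 1 := by unfold phi; nlinarith
  have h1 : 1 < phi := by unfold phi; nlinarith
  have h2 : phi < 2 := by unfold phi; nlinarith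
  refine ⟨hsq, h1, h2, ?_⟩
  symm
  apply eq_inv_of_mul_eq_one_left
  nlinarith

lemma W_diff (i k : ℕ) :
    phi - 2 < (W i (k + 2) : ℝ) - phi * W i (k + 1) ∧
      (W i (k + 2) : ℝ) - phi * W i (k + 1) < phi - 1 := by
  obtain ⟨hsq, h1, h2, -⟩ := phi_facts
  induction k with
  | zero =>
    have e1 : W i (0 + 1) = ⌊phi * (⌊phi * i⌋ : ℝ)⌋ := by simp [W]
    have e2 : W i (0 + 2) = ⌊phi * (⌊phi * i⌋ : ℝ)⌋ + ⌊phi * i⌋ := by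
      rw [← Int.floor_add_intCast]
      simp only [W, hsq]
      congr 1
      ring
    rw [e1, e2]
    generalize ⌊phi * (i : ℝ)⌋ = m
    have ha := Int.floor_le (phi * (m : ℝ))
    have hb := Int.lt_floor_add_one (phi * (m : ℝ))
    generalize ⌊phi * (m : ℝ)⌋ = a at *
    push_cast
    have key : (a : ℝ) + m - phi * a = (phi - 1) * (phi * m - a) := by
      linear_combination (-(m : ℝ)) * hsq
    rw [key]
    constructor <;> nlinarith
  | succ k ih =>
    have e : W i (k + 1 + 2) = W i (k + 2) + W i (k + 1) := by
      simp [W]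
    rw [e, show k + 1 + 1 = k + 2 from rfl]
    push_cast
    generalize (W i (k + 2) : ℝ) = x at *
    generalize (W i (k + 1) : ℝ) = y at *
    obtain ⟨p, q⟩ := ih
    have key : x + y - phi * x = -((phi - 1) * (x - phi * y)) := by
      linear_combination (-y) * hsq
    rw [key]
    constructor <;> nlinarith

/-- Successor formula in the rows of the Wythoff array: `W_{i,k+1} = ⌊φ W_{i,k} + φ⁻¹⌋`. -/
theorem wythoff_succ_floor (i k : ℕ) (hi : 0 < i) (hk : 0 < k) :
    W i (k + 1) = ⌊phi * (W i k : ℝ) + phi⁻¹⌋ := by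
  obtain ⟨n, rfl⟩ : ∃ n, k = n + 1 := ⟨k - 1, by omega⟩
  obtain ⟨p, q⟩ := W_diff i n
  obtain ⟨-, -, -, hinv⟩ := phi_facts
  symm
  rw [Int.floor_eq_iff, hinv, show n + 1 + 1 = n + 2 from rfl]
  constructor <;> linarith
end

section
/- For positive integers i, k, n it holds that W_{i,k} = F_n/2 if and only if there exists a positive integer ℓ such that (i, k, n) = ((F_{3ℓ−2}+1)/2, 1, 3ℓ). -/
open Real

lemma phi_eq : phi = goldenRatio := rfl

lemma key (i : ℕ) (hi : 0 < i) : ∃ δ : ℝ, 0 < δ ∧ δ < 1 ∧ phi * i = (⌊phi * (i : ℝ)⌋ : ℝ) + δ ∧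
    W i 1 = ⌊phi * (i : ℝ)⌋ + i - 1 ∧ W i 2 = 2 * ⌊phi * (i : ℝ)⌋ + i - 1 := by
  have hirr : Irrational (phi * (i : ℝ)) := by
    rw [phi_eq]
    exact Real.goldenRatio_irrational.mul_natCast hi.ne'
  have hsq : phi ^ 2 = phi + 1 := by rw [phi_eq]; exact Real.goldenRatio_sq
  have h1 : 1 < phi := by rw [phi_eq]; exact Real.one_lt_goldenRatio
  have h2 : phi < 2 := by rw [phi_eq]; exact Real.goldenRatio_lt_two
  set m := ⌊phi * (i : ℝ)⌋ with hm
  have hle : (m : ℝ) ≤ phi * i := Int.floor_le _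
  have hlt : phi * i < m + 1 := Int.lt_floor_add_one _
  have hne : (m : ℝ) ≠ phi * i := fun h => hirr ⟨(m : ℚ), by push_cast; exact h⟩
  have hlt' : (m : ℝ) < phi * i := lt_of_le_of_ne hle hne
  have e : phi * m = m + i - (phi - 1) * (phi * i - m) := by linear_combination (i : ℝ) * hsq
  have p1 : 0 < (phi - 1) * (phi * i - m) := mul_pos (by linarith) (by linarith)
  have p2 : (phi - 1) * (phi * i - m) < 1 := by nlinarith
  have w1 : ⌊phi * (m : ℝ)⌋ = m + i - 1 := by
    rw [Int.floor_eq_iff]; push_cast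
    constructor <;> linarith
  refine ⟨phi * i - m, by linarith, by linarith, by ring, ?_, ?_⟩
  · rw [W]; exact w1
  · rw [W, ← hm, show phi ^ 2 * (m : ℝ) = phi * m + m by rw [hsq]; ring, Int.floor_add_intCast, w1]
    ring

lemma err (i : ℕ) (hi : 0 < i) : ∃ c : ℝ, 0 < c ∧ c < 1 ∧
    ∀ k : ℕ, (W i (k + 2) : ℝ) - phi * W i (k + 1) = (1 - phi) ^ (k + 1) * (-c) := by
  obtain ⟨δ, h0, h1, hδ, hw1, hw2⟩ := key i hi
  have hsq : phi ^ 2 = phi + 1 := by rw [phi_eq]; exact Real.goldenRatio_sq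
  have g1 : 1 < phi := by rw [phi_eq]; exact Real.one_lt_goldenRatio
  have g2 : phi < 2 := by rw [phi_eq]; exact Real.goldenRatio_lt_two
  refine ⟨1 - (phi - 1) * δ, by nlinarith, by nlinarith, ?_⟩
  intro k
  induction k with
  | zero =>
    simp only [zero_add, hw1, hw2]
    push_cast
    generalize (⌊phi * (i : ℝ)⌋ : ℝ) = m at *
    obtain rfl : m = phi * i - δ := by linarith
    linear_combination (δ - i) * hsq
  | succ k ih =>
    have : W i (k + 1 + 2) = W i (k + 2) + W i (k + 1) := by rw [W]
    rw [this, pow_succ, mul_right_comm, ← ih]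
    push_cast
    rw [show k + 1 + 1 = k + 2 from rfl]
    linear_combination (-(W i (k+1) : ℝ)) * hsq

lemma fib_err (n : ℕ) : (Nat.fib (n + 1) : ℝ) - phi * Nat.fib n = (1 - phi) ^ n := by
  have := Real.fib_succ_sub_goldenRatio_mul_fib n
  rw [phi_eq, this, show goldenConj = 1 - goldenRatio by linarith [Real.goldenRatio_add_goldenConj]]

lemma fib_even {n : ℕ} (h : 2 ∣ Nat.fib n) : 3 ∣ n := by
  have h2 := Nat.fib_gcd n 3
  rw [show Nat.fib 3 = 2 from rfl, Nat.gcd_eq_right h] at h2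
  have h3 : Nat.gcd n 3 ∣ 3 := Nat.gcd_dvd_right _ _
  rcases (Nat.dvd_prime Nat.prime_three).1 h3 with h4 | h4
  · rw [h4] at h2; simp at h2
  · rw [← h4]; exact Nat.gcd_dvd_left _ _

lemma pow_bd (l : ℕ) : |(1 - phi) ^ (3 * l + 3)| ≤ (phi - 1) ^ 3 := by
  have g1 : 1 < phi := by rw [phi_eq]; exact Real.one_lt_goldenRatio
  have g2 : phi < 2 := by rw [phi_eq]; exact Real.goldenRatio_lt_two
  rw [abs_pow, abs_sub_comm, abs_of_pos (by linarith)]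
  exact pow_le_pow_of_le_one (by linarith) (by linarith) (by omega)

theorem wythoff_eq_half_fib_iff (i k n : ℕ) (hi : 0 < i) (hk : 0 < k) (hn : 0 < n) :
    2 * W i k = (Nat.fib n : ℤ) ↔
      ∃ ℓ : ℕ, 0 < ℓ ∧ 2 * i = Nat.fib (3 * ℓ - 2) + 1 ∧ k = 1 ∧ n = 3 * ℓ := by
  have hsq : phi ^ 2 = phi + 1 := by rw [phi_eq]; exact Real.goldenRatio_sq
  have g1 : 1.6 < phi := by
    have : 1 < phi := by rw [phi_eq]; exact Real.one_lt_goldenRatio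
    nlinarith
  have g2 : phi < 1.62 := by nlinarith
  have hcube : (phi - 1) ^ 3 = 2 * phi - 3 := by linear_combination (phi - 2) * hsq
  obtain ⟨δ, h0, h1, hδ, hw1, hw2⟩ := key i hi
  constructor
  · intro h
    have heven : 2 ∣ Nat.fib n := by
      have : (2 : ℤ) ∣ (Nat.fib n : ℤ) := ⟨_, h.symm⟩
      exact_mod_cast this
    obtain ⟨l, rfl⟩ := fib_even heven
    obtain ⟨l, rfl⟩ : ∃ j, l = j + 1 := ⟨l - 1, by omega⟩
    obtain ⟨k, rfl⟩ : ∃ j, k = j + 1 := ⟨k - 1, by omega⟩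
    have hodd : ¬ 2 ∣ Nat.fib (3 * (l + 1) + 1) := fun h' => by
      have := fib_even h'
      omega
    have hb := abs_le.1 (pow_bd l)
    obtain ⟨c, c0, c1, hc⟩ := err i hi
    have hck := hc k
    have hf := fib_err (3 * (l + 1))
    rw [show 3 * (l + 1) = 3 * l + 3 by ring] at *
    have hR : 2 * (W i (k + 1) : ℝ) = Nat.fib (3 * l + 3) := by exact_mod_cast h
    obtain ⟨D, hD⟩ : ∃ D : ℤ, D = 2 * W i (k + 2) - Nat.fib (3 * l + 3 + 1) := ⟨_, rfl⟩
    have hDR : (D : ℝ) = 2 * ((1 - phi) ^ (k + 1) * (-c)) - (1 - phi) ^ (3 * l + 3) := by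
      rw [hD]; push_cast; rw [← hck, ← hf, ← hR]; ring
    have hDodd : D % 2 = 1 := by omega
    -- bounds on the error
    have hE : ((1 - phi) ^ (k + 1) * (-c) < 2 * phi - 3 ∧ phi - 2 < (1 - phi) ^ (k + 1) * (-c)) ∨
        (k = 0 ∧ 0 < (1 - phi) ^ (k + 1) * (-c) ∧ (1 - phi) ^ (k + 1) * (-c) < phi - 1) := by
      rcases Nat.even_or_odd' k with ⟨j, rfl | rfl⟩
      · rcases j with _ | j
        · right
          refine ⟨rfl, ?_, ?_⟩ <;> simp <;> nlinarith
        · left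
          have q : (1 - phi) ^ (2 * (j + 1) + 1) = -((phi - 1) ^ 3 * ((phi - 1) ^ 2) ^ j) := by
            rw [show 1 - phi = -(phi - 1) by ring, Odd.neg_pow ⟨j + 1, rfl⟩]
            generalize phi - 1 = t
            ring
          have t0 : 0 < ((phi - 1) ^ 2) ^ j := by
            apply pow_pos; apply pow_pos; linarith
          have t1 : ((phi - 1) ^ 2) ^ j ≤ 1 := pow_le_one₀ (by positivity) (by nlinarith)
          rw [q, hcube]
          generalize ((phi - 1) ^ 2) ^ j = t at *
          have u0 : 0 < t * c := mul_pos t0 c0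
          have u1 : t * c < 1 := by nlinarith
          constructor <;> nlinarith
      · left
        have q : (1 - phi) ^ (2 * j + 1 + 1) = (2 - phi) * ((phi - 1) ^ 2) ^ j := by
          rw [show 2 - phi = (phi - 1) ^ 2 by linear_combination (-1 : ℝ) * hsq,
            show 1 - phi = -(phi - 1) by ring, Even.neg_pow ⟨j + 1, by ring⟩]
          generalize phi - 1 = t
          ring
        have t0 : 0 < ((phi - 1) ^ 2) ^ j := by
          apply pow_pos; apply pow_pos; linarith
        have t1 : ((phi - 1) ^ 2) ^ j ≤ 1 := pow_le_one₀ (by positivity) (by nlinarith)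
        rw [q]
        generalize ((phi - 1) ^ 2) ^ j = t at *
        have u0 : 0 < t * c := mul_pos t0 c0
        have u1 : t * c < 1 := by nlinarith
        constructor <;> nlinarith
    rw [hcube] at hb
    generalize (1 - phi) ^ (k + 1) * (-c) = E at *
    have hDlo : -1 < D := by
      have : (-1 : ℝ) < D := by rcases hE with h | h <;> linarith [h.1, h.2]
      exact_mod_cast this
    have hDhi : D < 2 := by
      have : (D : ℝ) < 2 := by
        rcases hE with h | h
        · linarith [h.1, h.2]
        · linarith [h.2.1, h.2.2]
      exact_mod_cast this
    have hD1 : D = 1 := by omega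
    rcases hE with hE | ⟨rfl, -, -⟩
    · rw [hD1] at hDR
      push_cast at hDR
      linarith [hE.1]
    · refine ⟨l + 1, by omega, ?_, rfl, by ring⟩
      simp only [zero_add] at *
      rw [show 3 * (l + 1) - 2 = 3 * l + 1 by omega]
      have f1 : Nat.fib (3 * l + 3) = Nat.fib (3 * l + 1) + Nat.fib (3 * l + 2) := Nat.fib_add_two
      have f2 : Nat.fib (3 * l + 3 + 1) = Nat.fib (3 * l + 2) + Nat.fib (3 * l + 3) :=
        Nat.fib_add_two
      omega
  · rintro ⟨l, hl, h2i, rfl, rfl⟩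
    obtain ⟨l, rfl⟩ : ∃ j, l = j + 1 := ⟨l - 1, by omega⟩
    rw [show 3 * (l + 1) - 2 = 3 * l + 1 by omega] at h2i
    have hodd : ¬ 2 ∣ Nat.fib (3 * l + 2) := fun h' => by
      have := fib_even h'
      omega
    have f1 : Nat.fib (3 * (l + 1)) = Nat.fib (3 * l + 1) + Nat.fib (3 * l + 2) := Nat.fib_add_two
    have hf := fib_err (3 * l + 1)
    have hb : |(1 - phi) ^ (3 * l + 1)| ≤ phi - 1 := by
      rw [abs_pow, abs_sub_comm, abs_of_pos (by linarith)]
      exact pow_le_of_le_one (by linarith) (by linarith) (by omega)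
    have hb := abs_le.1 hb
    have hiR : 2 * (i : ℝ) = Nat.fib (3 * l + 1) + 1 := by exact_mod_cast h2i
    obtain ⟨m, hm⟩ : ∃ m : ℤ, 2 * m = Nat.fib (3 * l + 2) + 1 :=
      ⟨(Nat.fib (3 * l + 2) + 1) / 2, by omega⟩
    have hmR : 2 * (m : ℝ) = Nat.fib (3 * l + 2) + 1 := by exact_mod_cast hm
    have hfl : ⌊phi * (i : ℝ)⌋ = m := by
      have e : 2 * (phi * i) = Nat.fib (3 * l + 2) - (1 - phi) ^ (3 * l + 1) + phi := by
        rw [← hf]; linear_combination phi * hiR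
      rw [Int.floor_eq_iff]
      constructor <;> linarith [hb.1, hb.2]
    rw [hw1, hfl]
    omega
end

section
/- For every positive integer ℓ it holds that ⌊ φ·F_{3ℓ}/2 + φ^{−1} ⌋ = (F_{3ℓ+1}+1)/2. -/
open Real

/-- `⌊φ·F_{3ℓ}/2 + φ⁻¹⌋ = (F_{3ℓ+1}+1)/2` for every `ℓ ≥ 1`. -/
theorem floor_phi_half_fib (ℓ : ℕ) (hℓ : 0 < ℓ) :
    2 * ⌊phi * (Nat.fib (3 * ℓ) : ℝ) / 2 + phi⁻¹⌋ = (Nat.fib (3 * ℓ + 1) : ℤ) + 1 := by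
  have hphi : phi = goldenRatio := rfl
  have hodd : ∃ m : ℤ, (Nat.fib (3 * ℓ + 1) : ℤ) + 1 = 2 * m := by
    have h : Nat.fib (3 * ℓ) % 2 = 0 ∧ Nat.fib (3 * ℓ + 1) % 2 = 1 := by
      clear hℓ
      induction ℓ with
      | zero => simp
      | succ k ih =>
        have h2 := Nat.fib_add_two (n := 3 * k)
        have h3 := Nat.fib_add_two (n := 3 * k + 1)
        have h4 := Nat.fib_add_two (n := 3 * k + 2)
        have e1 : 3 * (k + 1) = 3 * k + 1 + 2 := by ring
        have e2 : 3 * k + 1 + 2 + 1 = 3 * k + 2 + 2 := by ring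
        rw [e1, e2]
        simp only [Nat.add_assoc, Nat.reduceAdd] at *
        omega
    exact ⟨((Nat.fib (3 * ℓ + 1) : ℤ) + 1) / 2, by omega⟩
  obtain ⟨m, hm⟩ := hodd
  have key := fib_succ_sub_goldenRatio_mul_fib (3 * ℓ)
  have h5 : √5 ^ 2 = 5 := Real.sq_sqrt (by norm_num)
  have h5l : 2 < √5 := by
    rw [Real.lt_sqrt (by norm_num)]; norm_num
  have h5u : √5 < 2.5 := by
    rw [Real.sqrt_lt' (by norm_num)]; norm_num
  have hpsi : goldenConj = (1 - √5) / 2 := rfl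
  have hc : goldenConj ^ 3 = 2 - √5 := by
    rw [hpsi]; linear_combination (3 - √5) / 8 * h5
  have habs : |goldenConj ^ (3 * ℓ)| ≤ √5 - 2 := by
    rw [pow_mul, hc, abs_pow, abs_of_neg (by linarith), neg_sub]
    exact pow_le_of_le_one (by linarith) (by linarith) hℓ.ne'
  obtain ⟨ha, hb⟩ := abs_le.mp habs
  have hmR : (Nat.fib (3 * ℓ + 1) : ℝ) + 1 = 2 * m := by exact_mod_cast hm
  have hfl : ⌊phi * (Nat.fib (3 * ℓ) : ℝ) / 2 + phi⁻¹⌋ = m := by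
    rw [Int.floor_eq_iff, hphi, inv_goldenRatio]
    constructor <;> linarith
  rw [hfl, hm]
end

section
/- For every positive integer i it holds that μ_i = ⌊ log_φ (2 w_+(i)) ⌋, where log_φ denotes the logarithm to base φ. -/
open Real

noncomputable def mu (i : ℕ) : ℕ := sInf {m : ℕ | 0 < m ∧ 2 * W i 1 < (Nat.fib (m + 2) : ℤ)}

lemma fib_phi (n : ℕ) : phi ^ n = √5 * (Nat.fib n : ℝ) + goldenConj ^ n := by
  have h5 : (√5 : ℝ) ≠ 0 := by positivity
  rw [phi_eq, Real.coe_fib_eq]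
  field_simp
  ring

lemma abs_conj_pow (n : ℕ) : phi ^ n * |goldenConj ^ n| = 1 := by
  have h : (0 : ℝ) < phi := goldenRatio_pos
  rw [abs_pow, ← mul_pow]
  have : phi * |goldenConj| = 1 := by
    rw [abs_of_neg goldenConj_neg, phi_eq]
    have := goldenRatio_mul_goldenConj
    linarith
  rw [this, one_pow]

/-- `μ_i = ⌊log_φ(2w₊(i))⌋`. -/
theorem mu_eq_floor_logb (i : ℕ) (hi : 0 < i) :
    (mu i : ℤ) = ⌊Real.logb phi (2 * wplus i)⌋ := by
  have hp1 : (1 : ℝ) < phi := one_lt_goldenRatio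
  have hp0 : (0 : ℝ) < phi := goldenRatio_pos
  have hsq : phi ^ 2 = phi + 1 := goldenRatio_sq
  have h5 : √5 = 2 * phi - 1 := by unfold phi; ring
  have hplo : 1.6 < phi := by nlinarith
  have hphi : phi < 1.62 := by nlinarith
  obtain ⟨a, ha⟩ : ∃ a : ℤ, a = ⌊phi * i⌋ := ⟨_, rfl⟩
  obtain ⟨A, hA⟩ : ∃ A : ℤ, A = ⌊phi * (a : ℝ)⌋ := ⟨_, rfl⟩
  have hi1 : (1 : ℝ) ≤ i := by exact_mod_cast hi
  have ha1 : 1 ≤ a := by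
    rw [ha, Int.le_floor]; push_cast; nlinarith
  have ha1' : (1 : ℝ) ≤ a := by exact_mod_cast ha1
  have hA1 : 1 ≤ A := by
    rw [hA, Int.le_floor]; push_cast; nlinarith
  have hA1' : (1 : ℝ) ≤ A := by exact_mod_cast hA1
  have hW1 : W i 1 = A := by simp only [W]; rw [hA, ha]
  have hW2 : W i 2 = A + a := by
    simp only [W]
    rw [← ha, hsq, add_mul, one_mul, Int.floor_add_intCast, ← hA]
  have hinv : phi⁻¹ = phi - 1 := by
    apply inv_eq_of_mul_eq_one_right; nlinarith
  have hw : wplus i = A + (phi - 1) * a := by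
    unfold wplus
    rw [hW1, hW2, hinv]; push_cast
    linear_combination ((A : ℝ)) * hsq
  obtain ⟨e, he⟩ : ∃ e : ℝ, e = phi * a - A := ⟨_, rfl⟩
  have he0 : 0 ≤ e := by rw [he, hA]; linarith [Int.floor_le (phi * (a : ℝ))]
  have he1 : e < 1 := by rw [he, hA]; linarith [Int.lt_floor_add_one (phi * (a : ℝ))]
  have hene : e ≠ 0 := by
    have h := goldenRatio_irrational.mul_intCast (m := a) (by omega)
    intro h0
    apply h.ne_int A
    rw [← phi_eq]; linarith
  have hepos : 0 < e := lt_of_le_of_ne he0 hene.symm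
  have hwpos : 0 < wplus i := by rw [hw]; nlinarith
  have hew : 1 ≤ e * wplus i := by
    have h1 : e * wplus i = ((a ^ 2 + a * A - A ^ 2 : ℤ) : ℝ) := by
      rw [he, hw]; push_cast
      linear_combination ((a : ℝ) ^ 2) * hsq
    have h2 : 0 < e * wplus i := by positivity
    rw [h1] at h2 ⊢
    exact_mod_cast h2
  have hkey : 2 * wplus i * phi = √5 * (2 * A) + 2 * e * (phi - 1) := by
    rw [h5, hw, he]; ring
  have hne : {m : ℕ | 0 < m ∧ 2 * W i 1 < (Nat.fib (m + 2) : ℤ)}.Nonempty := by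
    refine ⟨(2 * A).toNat + 5, by omega, ?_⟩
    have := Nat.le_fib_self (n := (2 * A).toNat + 5 + 2) (by omega)
    rw [hW1]; omega
  have hmem := Nat.sInf_mem hne
  have hlow : (Nat.fib (mu i + 1) : ℤ) ≤ 2 * A := by
    by_contra hcon
    push Not at hcon
    have hmu : 0 < mu i := hmem.1
    rcases Nat.lt_or_ge 1 (mu i) with h | h
    · have h' : mu i - 1 < sInf {m : ℕ | 0 < m ∧ 2 * W i 1 < (Nat.fib (m + 2) : ℤ)} := by
        change mu i - 1 < mu i; omega
      apply Nat.notMem_of_lt_sInf h'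
      refine ⟨by omega, ?_⟩
      rw [hW1, show mu i - 1 + 2 = mu i + 1 by omega]
      exact hcon
    · have : mu i = 1 := by omega
      rw [this] at hcon
      norm_num at hcon
      omega
  have hup : 2 * A + 1 ≤ (Nat.fib (mu i + 2) : ℤ) := by
    have : 2 * W i 1 < (Nat.fib (mu i + 2) : ℤ) := hmem.2
    rw [hW1] at this
    exact this
  generalize mu i = m at hlow hup
  have hPge : ∀ n : ℕ, 1 ≤ phi ^ n := fun n => one_le_pow₀ hp1.le
  have hQle : ∀ n : ℕ, |goldenConj ^ n| ≤ 1 := fun n => by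
    have := abs_conj_pow n
    nlinarith [hPge n, abs_nonneg (goldenConj ^ n)]
  have hub : 2 * wplus i < phi ^ (m + 1) := by
    have h1 := fib_phi (m + 2)
    have h2 : (2 * A + 1 : ℝ) ≤ (Nat.fib (m + 2) : ℝ) := by exact_mod_cast hup
    have hq : |goldenConj ^ (m + 2)| ≤ phi - 1 := by
      have := abs_conj_pow (m + 2)
      have h3 : phi ≤ phi ^ (m + 2) := le_self_pow₀ hp1.le (by omega)
      nlinarith [abs_nonneg (goldenConj ^ (m + 2))]
    have hq' := neg_abs_le (goldenConj ^ (m + 2))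
    have h4 : 2 * wplus i * phi < phi ^ (m + 1) * phi := by
      rw [hkey, ← pow_succ, h1]
      have : √5 * (2 * A + 1) ≤ √5 * (Nat.fib (m + 2) : ℝ) := by gcongr
      nlinarith
    exact lt_of_mul_lt_mul_right h4 hp0.le
  have hlb : phi ^ m ≤ 2 * wplus i := by
    by_contra hcon
    push Not at hcon
    have h1 := fib_phi (m + 1)
    have hq := abs_conj_pow (m + 1)
    have hqa := le_abs_self (goldenConj ^ (m + 1))
    have hq1 := hQle (m + 1)
    have h4 : 2 * wplus i * phi < phi ^ m * phi := by gcongr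
    rw [hkey, ← pow_succ, h1] at h4
    rcases hlow.lt_or_eq with h | h
    · have h2 : (Nat.fib (m + 1) + 1 : ℝ) ≤ 2 * A := by exact_mod_cast h
      have : √5 * (Nat.fib (m + 1) + 1 : ℝ) ≤ √5 * (2 * A) := by gcongr
      nlinarith
    · have h2 : (Nat.fib (m + 1) : ℝ) = 2 * A := by exact_mod_cast h
      rw [h2] at h4
      have h5' : 2 * e * (phi - 1) < |goldenConj ^ (m + 1)| := by linarith
      have h6 : 2 * e * (phi - 1) * phi ^ (m + 1) < 1 := by
        nlinarith [hPge (m + 1)]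
      have h7 : 2 * e * (phi - 1) * phi ^ (m + 1) = 2 * e * phi ^ m := by
        rw [pow_succ]; linear_combination (2 * e * phi ^ m) * hsq
      have h8 : e * (2 * wplus i) < e * phi ^ m := by gcongr
      linarith
  symm
  rw [Int.floor_eq_iff]
  have h2w : 0 < 2 * wplus i := by positivity
  constructor
  · rw [Real.le_logb_iff_rpow_le hp1 h2w]
    push_cast
    rw [Real.rpow_natCast]
    exact hlb
  · rw [Real.logb_lt_iff_lt_rpow hp1 h2w]
    have : (((m : ℤ) : ℝ) + 1) = ((m + 1 : ℕ) : ℝ) := by push_cast; ring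
    rw [this, Real.rpow_natCast]
    exact hub
end
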